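/- There exist absolute constants c > 0 and C > 0 such that for every integer N ≥ 3 and every set A of prime numbers with A ⊆ {1,…,N}, if A contains no non-trivial three-term arithmetic progression, then |A| ≤ C·π(N)/(log N)^c, where π(N) denotes the number of primes at most N. -/

import Mathlib

set_option linter.unusedSectionVars false
namespace KM
open Finset

section Bohr
variable {G : Type*} [AddCommGroup G] [Fintype G] [DecidableEq G]

open Classical in
/-- The Bohr set of radius `ρ` with frequency set `Γ`. -/
noncomputable def bohr (Γ : Finset (AddChar G ℂ)) (ρ : ℝ) : Finset G :=
  univ.filter fun x => ∀ ψ ∈ Γ, ‖1 - ψ x‖ ≤ ρ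

lemma mem_bohr {Γ : Finset (AddChar G ℂ)} {ρ : ℝ} {x : G} :
    x ∈ bohr Γ ρ ↔ ∀ ψ ∈ Γ, ‖1 - ψ x‖ ≤ ρ := by simp [bohr]

lemma char_sub_norm (ψ : AddChar G ℂ) (x y : G) : ‖1 - ψ (x - y)‖ = ‖ψ x - ψ y‖ := by
  have h : ψ x - ψ y = (ψ (x - y) - 1) * ψ y := by
    rw [sub_mul, one_mul, ← AddChar.map_add_eq_mul, sub_add_cancel]
  rw [h, norm_mul, AddChar.norm_apply, mul_one, norm_sub_rev]

lemma zero_mem_bohr (Γ : Finset (AddChar G ℂ)) {ρ : ℝ} (h : 0 ≤ ρ) : (0 : G) ∈ bohr Γ ρ := by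
  rw [mem_bohr]; intro ψ _; simpa using h

lemma bohr_card_pos (Γ : Finset (AddChar G ℂ)) {ρ : ℝ} (h : 0 ≤ ρ) : 0 < (bohr Γ ρ).card :=
  card_pos.2 ⟨0, zero_mem_bohr Γ h⟩

lemma add_mem_bohr {Γ : Finset (AddChar G ℂ)} {ρ σ τ : ℝ} {x y : G} (hx : x ∈ bohr Γ ρ)
    (hy : y ∈ bohr Γ σ) (h : ρ + σ ≤ τ) : x + y ∈ bohr Γ τ := by
  rw [mem_bohr] at *
  intro ψ hψ
  have e : 1 - ψ (x + y) = (1 - ψ x) + ψ x * (1 - ψ y) := by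
    rw [AddChar.map_add_eq_mul]; ring
  calc ‖1 - ψ (x + y)‖ ≤ ‖1 - ψ x‖ + ‖ψ x * (1 - ψ y)‖ := by rw [e]; exact norm_add_le _ _
    _ = ‖1 - ψ x‖ + ‖1 - ψ y‖ := by rw [norm_mul, AddChar.norm_apply, one_mul]
    _ ≤ τ := by linarith [hx ψ hψ, hy ψ hψ]

lemma neg_mem_bohr {Γ : Finset (AddChar G ℂ)} {ρ : ℝ} {x : G} (hx : x ∈ bohr Γ ρ) :
    -x ∈ bohr Γ ρ := by
  rw [mem_bohr] at *
  intro ψ hψ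
  have := char_sub_norm ψ 0 x
  rw [zero_sub, AddChar.map_zero_eq_one] at this
  rw [this]; exact hx ψ hψ

lemma sub_mem_bohr {Γ : Finset (AddChar G ℂ)} {ρ σ τ : ℝ} {x y : G} (hx : x ∈ bohr Γ ρ)
    (hy : y ∈ bohr Γ σ) (h : ρ + σ ≤ τ) : x - y ∈ bohr Γ τ := by
  rw [sub_eq_add_neg]; exact add_mem_bohr hx (neg_mem_bohr hy) h

lemma bohr_mono (Γ : Finset (AddChar G ℂ)) {ρ σ : ℝ} (h : ρ ≤ σ) : bohr Γ ρ ⊆ bohr Γ σ := by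
  intro x hx; rw [mem_bohr] at *; exact fun ψ hψ => (hx ψ hψ).trans h

lemma bohr_anti {Γ Γ' : Finset (AddChar G ℂ)} (h : Γ ⊆ Γ') (ρ : ℝ) : bohr Γ' ρ ⊆ bohr Γ ρ := by
  intro x hx; rw [mem_bohr] at *; exact fun ψ hψ => hx ψ (h hψ)

lemma bohr_two (Γ : Finset (AddChar G ℂ)) {ρ : ℝ} (h : 2 ≤ ρ) : bohr Γ ρ = univ := by
  ext x; simp only [mem_bohr, mem_univ, iff_true]
  intro ψ _
  calc ‖1 - ψ x‖ ≤ ‖(1 : ℂ)‖ + ‖ψ x‖ := norm_sub_le _ _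
    _ = 2 := by rw [AddChar.norm_apply]; norm_num
    _ ≤ ρ := h

lemma floor_cell {u ρ : ℝ} (hρ : 0 < ρ) (h : |u| ≤ 2 * ρ) :
    ⌊3 * u / (2 * ρ)⌋ ∈ Icc (-3 : ℤ) 3 := by
  rw [abs_le] at h
  rw [mem_Icc]
  constructor
  · rw [Int.le_floor, le_div_iff₀ (by positivity)]; push_cast; linarith
  · rw [← Int.lt_add_one_iff, Int.floor_lt, div_lt_iff₀ (by positivity)]; push_cast; linarith

lemma floor_cell_close {u v ρ : ℝ} (hρ : 0 < ρ)
    (h : ⌊3 * u / (2 * ρ)⌋ = ⌊3 * v / (2 * ρ)⌋) : |u - v| ≤ 2 / 3 * ρ := by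
  have h1 := Int.abs_sub_lt_one_of_floor_eq_floor h
  rw [← sub_div, abs_div, abs_of_pos (by positivity : 0 < 2 * ρ), div_lt_one (by positivity)] at h1
  rw [← mul_sub, abs_mul] at h1
  norm_num at h1
  linarith

lemma bohr_doubling (Γ : Finset (AddChar G ℂ)) {ρ : ℝ} (hρ : 0 < ρ) :
    (bohr Γ (2 * ρ)).card ≤ (bohr Γ ρ).card * 64 ^ Γ.card := by
  classical
  let F : G → (Γ → ℤ × ℤ) := fun x ψ =>
    (⌊3 * (1 - (ψ : AddChar G ℂ) x).re / (2 * ρ)⌋, ⌊3 * (1 - (ψ : AddChar G ℂ) x).im / (2 * ρ)⌋)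
  let t : Finset (Γ → ℤ × ℤ) := Fintype.piFinset fun _ => (Icc (-3 : ℤ) 3) ×ˢ (Icc (-3 : ℤ) 3)
  have ht : t.card ≤ 64 ^ Γ.card := by
    simp only [t, Fintype.card_piFinset, card_product, Int.card_Icc, prod_const, card_univ,
      Fintype.card_coe]
    exact Nat.pow_le_pow_left (by decide) _
  refine (card_le_mul_card_image_of_maps_to (s := bohr Γ (2 * ρ)) (f := F) (t := t) ?_
    (bohr Γ ρ).card ?_).trans (Nat.mul_le_mul_left _ ht)
  · intro x hx
    rw [mem_bohr] at hx
    simp only [t, F, Fintype.mem_piFinset, mem_product]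
    intro ψ
    exact ⟨floor_cell hρ ((Complex.abs_re_le_norm _).trans (hx ψ ψ.2)),
      floor_cell hρ ((Complex.abs_im_le_norm _).trans (hx ψ ψ.2))⟩
  · intro b _
    rcases (filter (fun a => F a = b) (bohr Γ (2 * ρ))).eq_empty_or_nonempty with h0 | ⟨y, hy⟩
    · rw [h0]; simp
    · refine card_le_card_of_injOn (fun x => x - y) ?_ ?_
      · intro x hx
        simp only [coe_filter, Set.mem_ofPred_eq, mem_coe, mem_filter] at hx hy ⊢
        rw [mem_bohr]
        intro ψ hψ
        rw [char_sub_norm]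
        have e := congrFun (hx.2.trans hy.2.symm) ⟨ψ, hψ⟩
        simp only [F, Prod.mk.injEq] at e
        have e1 := floor_cell_close hρ e.1
        have e2 := floor_cell_close hρ e.2
        have e3 : ψ x - ψ y = -((1 - ψ x) - (1 - ψ y)) := by ring
        rw [e3, norm_neg, ← abs_of_nonneg hρ.le, ← abs_norm, ← sq_le_sq, Complex.sq_norm,
          Complex.normSq_apply, Complex.sub_re (1 - ψ x), Complex.sub_im (1 - ψ x)]
        nlinarith [abs_le.1 e1, abs_le.1 e2, sq_abs ((1 - ψ x).re - (1 - ψ y).re),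
          sq_abs ((1 - ψ x).im - (1 - ψ y).im), abs_nonneg ((1 - ψ x).re - (1 - ψ y).re),
          abs_nonneg ((1 - ψ x).im - (1 - ψ y).im)]
      · intro a _ b _ h; simpa using h

lemma bohr_card_lower (Γ : Finset (AddChar G ℂ)) {ρ : ℝ} (hρ : 0 < ρ) (j : ℕ)
    (hj : 2 ≤ 2 ^ j * ρ) : Fintype.card G ≤ (bohr Γ ρ).card * 64 ^ (Γ.card * j) := by
  have key : ∀ j : ℕ, (bohr Γ (2 ^ j * ρ)).card ≤ (bohr Γ ρ).card * 64 ^ (Γ.card * j) := by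
    intro j
    induction j with
    | zero => simp
    | succ j ih =>
      have h := bohr_doubling Γ (ρ := 2 ^ j * ρ) (by positivity)
      have e : (2 : ℝ) ^ (j + 1) * ρ = 2 * (2 ^ j * ρ) := by ring
      rw [e]
      calc _ ≤ _ := h
        _ ≤ ((bohr Γ ρ).card * 64 ^ (Γ.card * j)) * 64 ^ Γ.card := Nat.mul_le_mul_right _ ih
        _ = _ := by rw [mul_assoc, ← pow_add, Nat.mul_succ]
  have := key j
  rwa [bohr_two Γ hj, card_univ] at this

/-- Regularity of a Bohr set at a fixed scale. -/
def Reg (κ : ℝ) (m : ℕ) (Γ : Finset (AddChar G ℂ)) (ρ : ℝ) : Prop :=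
  ((bohr Γ (ρ + κ * ρ)).card : ℝ) ≤ (1 + 1 / m) * (bohr Γ (ρ - κ * ρ)).card

lemma exists_reg (d m : ℕ) (hm : 0 < m) (κ : ℝ) (hκ0 : 0 < κ)
    (hκ : 4 * ((6 * d * m + 1 : ℕ) : ℝ) * κ ≤ 1) (Γ : Finset (AddChar G ℂ)) (hΓ : Γ.card ≤ d)
    (ρ : ℝ) (hρ : 0 < ρ) : ∃ ρ', ρ / 2 ≤ ρ' ∧ ρ' ≤ ρ ∧ Reg κ m Γ ρ' := by
  by_contra! hcon
  set J := 6 * d * m + 1 with hJ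
  have hmR : (0 : ℝ) < m := by exact_mod_cast hm
  let y : ℕ → ℝ := fun j => ρ / 2 + 2 * j * (κ * ρ)
  have hκρ : 0 < κ * ρ := by positivity
  have step : ∀ j < J, (1 + 1 / (m : ℝ)) * (bohr Γ (y j)).card < (bohr Γ (y (j + 1))).card := by
    intro j hj
    have hjR : (j : ℝ) + 1 ≤ J := by exact_mod_cast hj
    have hbound : 4 * (J : ℝ) * (κ * ρ) ≤ ρ := by nlinarith
    have hub : y j + κ * ρ ≤ ρ := by
      simp only [y]; nlinarith
    have hlb : ρ / 2 ≤ y j + κ * ρ := by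
      simp only [y]; have : 0 ≤ 2 * (j : ℝ) * (κ * ρ) := by positivity
      linarith
    have h := hcon (y j + κ * ρ) hlb hub
    unfold Reg at h
    push Not at h
    have hle : κ * (y j + κ * ρ) ≤ κ * ρ := mul_le_mul_of_nonneg_left hub hκ0.le
    have a1 : ((bohr Γ (y j)).card : ℝ) ≤ (bohr Γ (y j + κ * ρ - κ * (y j + κ * ρ))).card := by
      exact_mod_cast card_le_card (bohr_mono Γ (by linarith))
    have a2 : ((bohr Γ (y j + κ * ρ + κ * (y j + κ * ρ))).card : ℝ) ≤ (bohr Γ (y (j+1))).card := by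
      refine mod_cast card_le_card (bohr_mono Γ ?_)
      have : y (j + 1) = y j + κ * ρ + κ * ρ := by simp only [y]; push_cast; ring
      linarith
    have a3 : (1 + 1 / (m : ℝ)) * (bohr Γ (y j)).card ≤
        (1 + 1 / (m : ℝ)) * (bohr Γ (y j + κ * ρ - κ * (y j + κ * ρ))).card :=
      mul_le_mul_of_nonneg_left a1 (by positivity)
    linarith
  have iter : ∀ j ≤ J, (1 + 1 / (m : ℝ)) ^ j * (bohr Γ (y 0)).card ≤ (bohr Γ (y j)).card := by
    intro j
    induction j with
    | zero => intro _; simp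
    | succ j ih =>
      intro hj
      have h1 := ih (by omega)
      have h2 := step j (by omega)
      rw [pow_succ]
      have : (1 + 1 / (m : ℝ)) * ((1 + 1 / (m : ℝ)) ^ j * (bohr Γ (y 0)).card) ≤
        (1 + 1 / (m : ℝ)) * (bohr Γ (y j)).card := mul_le_mul_of_nonneg_left h1 (by positivity)
      linarith
  have hJ' := iter (J - 1) (by omega)
  have hlast := step (J - 1) (by omega)
  have e0 : y 0 = ρ / 2 := by simp [y]
  have hyJ : y (J - 1 + 1) ≤ ρ := by
    have : J - 1 + 1 = J := by omega
    rw [this]; simp only [y]; nlinarith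
  have hdb : ((bohr Γ ρ).card : ℝ) ≤ (bohr Γ (ρ / 2)).card * 64 ^ Γ.card := by
    have := bohr_doubling Γ (ρ := ρ / 2) (by positivity)
    rw [show 2 * (ρ / 2) = ρ by ring] at this
    exact_mod_cast this
  have hmon : ((bohr Γ (y (J - 1 + 1))).card : ℝ) ≤ (bohr Γ ρ).card := by
    exact_mod_cast card_le_card (bohr_mono Γ hyJ)
  have hpow : (64 : ℝ) ^ Γ.card ≤ (1 + 1 / (m : ℝ)) ^ (J - 1) := by
    have hb : (2 : ℝ) ≤ (1 + 1 / (m : ℝ)) ^ m := by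
      have := one_add_mul_le_pow (a := 1 / (m : ℝ)) (by have : 0 < 1 / (m : ℝ) := by positivity
                                                        linarith) m
      have e : (m : ℝ) * (1 / m) = 1 := by field_simp
      linarith
    calc (64 : ℝ) ^ Γ.card ≤ 64 ^ d := pow_le_pow_right₀ (by norm_num) hΓ
      _ = 2 ^ (6 * d) := by rw [pow_mul]; norm_num
      _ ≤ ((1 + 1 / (m : ℝ)) ^ m) ^ (6 * d) := pow_le_pow_left₀ (by norm_num) hb _
      _ = _ := by rw [← pow_mul, hJ, Nat.add_sub_cancel]; congr 1; ring
  have hpos : (0 : ℝ) < (bohr Γ (ρ / 2)).card := by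
    exact_mod_cast bohr_card_pos Γ (by positivity)
  rw [e0] at hJ'
  have h3 : ((bohr Γ (ρ / 2)).card : ℝ) * 64 ^ Γ.card ≤ (bohr Γ (y (J - 1))).card := by
    nlinarith
  have h4 : (bohr Γ (y (J - 1))).card < (1 + 1 / (m : ℝ)) * (bohr Γ (y (J - 1))).card := by
    have : (0 : ℝ) < (bohr Γ (y (J - 1))).card := by nlinarith [show (0:ℝ) < 64 ^ Γ.card by positivity]
    have : 0 < 1 / (m : ℝ) * (bohr Γ (y (J - 1))).card := by positivity
    linarith
  linarith

end Bohr
end KM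

set_option linter.unusedSectionVars false
namespace KM
open Finset
open scoped Pointwise

section Avg
variable {G : Type*} [AddCommGroup G] [Fintype G] [DecidableEq G]

/-- Average of `f` over the translate `x + X`. -/
noncomputable def avg (X : Finset G) (f : G → ℝ) (x : G) : ℝ := (∑ t ∈ X, f (x + t)) / X.card

/-- Indicator function. -/
noncomputable def ind (X : Finset G) (x : G) : ℝ := if x ∈ X then 1 else 0

lemma ind_nonneg (X : Finset G) (x : G) : 0 ≤ ind X x := by unfold ind; split_ifs <;> norm_num
lemma ind_le_one (X : Finset G) (x : G) : ind X x ≤ 1 := by unfold ind; split_ifs <;> norm_num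

lemma avg_comm (X Y : Finset G) (f : G → ℝ) : avg X (avg Y f) = avg Y (avg X f) := by
  funext x
  simp only [avg]
  rw [← sum_div, ← sum_div, sum_comm, div_right_comm]
  congr 2
  refine sum_congr rfl fun _ _ => sum_congr rfl fun _ _ => ?_
  congr 1; abel

lemma avg_mono (X : Finset G) {f g : G → ℝ} (h : ∀ x, f x ≤ g x) (x : G) : avg X f x ≤ avg X g x := by
  unfold avg
  gcongr
  exact h _

lemma avg_const_mul (X : Finset G) (c : ℝ) (f : G → ℝ) :
    avg X (fun x => c * f x) = fun x => c * avg X f x := by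
  funext x; simp only [avg]; rw [← mul_sum, mul_div_assoc]

lemma avg_le (X : Finset G) (hX : X.Nonempty) {f : G → ℝ} {c : ℝ} (h : ∀ x, f x ≤ c) (x : G) :
    avg X f x ≤ c := by
  have hc : (0 : ℝ) < X.card := by exact_mod_cast hX.card_pos
  unfold avg
  rw [div_le_iff₀ hc]
  calc _ ≤ ∑ t ∈ X, c := sum_le_sum fun t _ => h _
    _ = _ := by rw [sum_const, nsmul_eq_mul, mul_comm]

lemma avg_nonneg (X : Finset G) {f : G → ℝ} (h : ∀ x, 0 ≤ f x) (x : G) : 0 ≤ avg X f x := by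
  unfold avg; exact div_nonneg (sum_nonneg fun _ _ => h _) (by positivity)

lemma abs_avg_sub_le (X : Finset G) (hX : X.Nonempty) {f g : G → ℝ} {c : ℝ}
    (h : ∀ x, ∀ t ∈ X, |f (x + t) - g x| ≤ c) (x : G) : |avg X f x - g x| ≤ c := by
  have hc : (0 : ℝ) < X.card := by exact_mod_cast hX.card_pos
  unfold avg
  have e : (∑ t ∈ X, f (x + t)) / X.card - g x = (∑ t ∈ X, (f (x + t) - g x)) / X.card := by
    rw [sum_sub_distrib, sum_const, nsmul_eq_mul]; field_simp
  rw [e, abs_div, abs_of_pos hc, div_le_iff₀ hc]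
  calc _ ≤ ∑ t ∈ X, |f (x + t) - g x| := abs_sum_le_sum_abs _ _
    _ ≤ ∑ t ∈ X, c := sum_le_sum fun t ht => h x t ht
    _ = _ := by rw [sum_const, nsmul_eq_mul, mul_comm]

/-- Averaging over `T - T`. -/
noncomputable def avg2 (T : Finset G) (f : G → ℝ) : G → ℝ := avg T (avg (-T) f)

lemma avg2_apply (T : Finset G) (f : G → ℝ) (x : G) :
    avg2 T f x = (∑ t ∈ T, ∑ s ∈ T, f (x + (t - s))) / (T.card * T.card) := by
  simp only [avg2, avg, card_neg]
  rw [← sum_div, div_div]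
  congr 1
  refine sum_congr rfl fun t _ => ?_
  rw [sum_neg_index]
  refine sum_congr rfl fun s _ => ?_
  congr 1; abel

lemma avg2_iter_close (T : Finset G) (hT : T.Nonempty) {f : G → ℝ} {c : ℝ}
    (h : ∀ x, ∀ t ∈ T, ∀ s ∈ T, |f (x + (t - s)) - f x| ≤ c) (r : ℕ) (x : G) :
    |(avg2 T)^[r] f x - f x| ≤ r * c := by
  have hN : (-T).Nonempty := hT.neg
  have contr : ∀ (g₁ g₂ : G → ℝ) (b : ℝ), (∀ x, |g₁ x - g₂ x| ≤ b) →
      ∀ x, |avg2 T g₁ x - avg2 T g₂ x| ≤ b := by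
    intro g₁ g₂ b hb x
    have hc : (0 : ℝ) < T.card := by exact_mod_cast hT.card_pos
    rw [avg2_apply, avg2_apply, ← sub_div, ← sum_sub_distrib, abs_div,
      abs_of_pos (by positivity : (0:ℝ) < T.card * T.card), div_le_iff₀ (by positivity)]
    calc _ ≤ ∑ t ∈ T, |(∑ s ∈ T, g₁ (x + (t - s)) - ∑ s ∈ T, g₂ (x + (t - s)))| :=
          abs_sum_le_sum_abs _ _
      _ ≤ ∑ t ∈ T, ∑ s ∈ T, b := by
          refine sum_le_sum fun t _ => ?_
          rw [← sum_sub_distrib]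
          exact (abs_sum_le_sum_abs _ _).trans (sum_le_sum fun s _ => hb _)
      _ = _ := by simp only [sum_const, nsmul_eq_mul]; ring
  have one : ∀ x, |avg2 T f x - f x| ≤ c := by
    intro x
    have hc : (0 : ℝ) < T.card := by exact_mod_cast hT.card_pos
    have e : avg2 T f x - f x = (∑ t ∈ T, ∑ s ∈ T, (f (x + (t - s)) - f x)) / (T.card * T.card) := by
      rw [avg2_apply]; simp only [sum_sub_distrib, sum_const, nsmul_eq_mul]; field_simp
    rw [e, abs_div, abs_of_pos (by positivity : (0:ℝ) < T.card * T.card), div_le_iff₀ (by positivity)]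
    calc _ ≤ ∑ t ∈ T, |∑ s ∈ T, (f (x + (t - s)) - f x)| := abs_sum_le_sum_abs _ _
      _ ≤ ∑ t ∈ T, ∑ s ∈ T, c := by
          refine sum_le_sum fun t ht => ?_
          exact (abs_sum_le_sum_abs _ _).trans (sum_le_sum fun s hs => h x t ht s hs)
      _ = _ := by simp only [sum_const, nsmul_eq_mul]; ring
  induction r generalizing x with
  | zero => simp
  | succ r ih =>
    rw [Function.iterate_succ_apply']
    have h1 := contr _ _ _ ih x
    have h2 := one x
    have := abs_add_le (avg2 T ((avg2 T)^[r] f) x - avg2 T f x) (avg2 T f x - f x)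
    rw [sub_add_sub_cancel] at this
    push_cast
    linarith

lemma avg2_iter_mono (T : Finset G) {f g : G → ℝ} (h : ∀ x, f x ≤ g x) (r : ℕ) (x : G) :
    (avg2 T)^[r] f x ≤ (avg2 T)^[r] g x := by
  induction r generalizing x with
  | zero => exact h x
  | succ r ih =>
    rw [Function.iterate_succ_apply', Function.iterate_succ_apply']
    exact avg_mono T (fun y => avg_mono _ ih y) x

lemma avg2_iter_le (T : Finset G) (hT : T.Nonempty) {f : G → ℝ} {c : ℝ} (h : ∀ x, f x ≤ c)
    (r : ℕ) (x : G) : (avg2 T)^[r] f x ≤ c := by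
  induction r generalizing x with
  | zero => exact h x
  | succ r ih =>
    rw [Function.iterate_succ_apply']
    exact avg_le T hT (fun y => avg_le _ hT.neg ih y) x

lemma avg_avg2_iter_comm (B T : Finset G) (f : G → ℝ) (r : ℕ) :
    avg B ((avg2 T)^[r] f) = (avg2 T)^[r] (avg B f) := by
  induction r with
  | zero => rfl
  | succ r ih =>
    rw [Function.iterate_succ_apply', Function.iterate_succ_apply', ← ih]
    unfold avg2
    rw [avg_comm B T, avg_comm B (-T)]

lemma avg2_iter_const_mul (T : Finset G) (c : ℝ) (f : G → ℝ) (r : ℕ) :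
    (avg2 T)^[r] (fun x => c * f x) = fun x => c * (avg2 T)^[r] f x := by
  induction r with
  | zero => rfl
  | succ r ih =>
    rw [Function.iterate_succ_apply', Function.iterate_succ_apply', ih]
    unfold avg2
    rw [avg_const_mul, avg_const_mul]

/-- Fourier multiplier of `avg X`. -/
noncomputable def mu (X : Finset G) (ψ : AddChar G ℂ) : ℂ := (∑ t ∈ X, ψ t) / X.card

/-- `f` has Fourier coefficients `c`. -/
def IsInv (f : G → ℝ) (c : AddChar G ℂ → ℂ) : Prop :=
  ∀ x, (f x : ℂ) = (∑ ψ, c ψ * ψ x) / Fintype.card G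

lemma IsInv.avg {f : G → ℝ} {c : AddChar G ℂ → ℂ} (h : IsInv f c) (X : Finset G) :
    IsInv (avg X f) (fun ψ => c ψ * mu X ψ) := by
  intro x
  simp only [KM.avg, mu]
  push_cast
  simp only [h _]
  rw [← sum_div, div_right_comm]
  congr 1
  rw [sum_comm, sum_div]
  refine sum_congr rfl fun ψ _ => ?_
  simp only [AddChar.map_add_eq_mul]
  rw [← mul_sum, ← mul_sum]
  ring

lemma isInv_ind (S : Finset G) : IsInv (ind S) (fun ψ => ∑ s ∈ S, ψ (-s)) := by
  intro x
  have hN : (Fintype.card G : ℂ) ≠ 0 := by exact_mod_cast Fintype.card_ne_zero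
  rw [eq_div_iff hN]
  simp only [sum_mul]
  rw [sum_comm]
  have : ∀ s ∈ S, ∑ ψ : AddChar G ℂ, ψ (-s) * ψ x = if s = x then (Fintype.card G : ℂ) else 0 := by
    intro s _
    simp only [← AddChar.map_add_eq_mul]
    rw [AddChar.sum_apply_eq_ite]
    simp only [neg_add_eq_zero]
  rw [sum_congr rfl this, sum_ite_eq']
  unfold ind
  split_ifs <;> simp

lemma parseval (X : Finset G) :
    ∑ ψ : AddChar G ℂ, ‖∑ x ∈ X, ψ x‖ ^ 2 = Fintype.card G * X.card := by
  have key : ∑ ψ : AddChar G ℂ, ((‖∑ x ∈ X, ψ x‖ ^ 2 : ℝ) : ℂ) = Fintype.card G * X.card := by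
    have : ∀ ψ : AddChar G ℂ, ((‖∑ x ∈ X, ψ x‖ ^ 2 : ℝ) : ℂ) = ∑ x ∈ X, ∑ y ∈ X, ψ (x - y) := by
      intro ψ
      push_cast
      rw [← Complex.mul_conj', map_sum, sum_mul_sum]
      refine sum_congr rfl fun x _ => sum_congr rfl fun y _ => ?_
      rw [sub_eq_add_neg, AddChar.map_add_eq_mul, AddChar.map_neg_eq_conj]
    simp only [this]
    rw [sum_comm]
    have h2 : ∀ x ∈ X, ∑ ψ : AddChar G ℂ, ∑ y ∈ X, ψ (x - y) = Fintype.card G := by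
      intro x hx
      rw [sum_comm]
      simp only [AddChar.sum_apply_eq_ite, sub_eq_zero]
      rw [sum_ite_eq]; simp [hx]
    rw [sum_congr rfl h2, sum_const, nsmul_eq_mul, mul_comm]
  exact_mod_cast key

lemma norm_mu_le_one (X : Finset G) (ψ : AddChar G ℂ) : ‖mu X ψ‖ ≤ 1 := by
  unfold mu
  rw [norm_div, Complex.norm_natCast]
  apply div_le_one_of_le₀ _ (by positivity)
  calc _ ≤ ∑ t ∈ X, ‖ψ t‖ := norm_sum_le _ _
    _ = X.card := by simp [AddChar.norm_apply]

lemma norm_mu_neg (X : Finset G) (ψ : AddChar G ℂ) : ‖mu (-X) ψ‖ = ‖mu X ψ‖ := by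
  unfold mu
  rw [card_neg, sum_neg_index, norm_div, norm_div]
  congr 1
  simp only [AddChar.map_neg_eq_conj]
  rw [← map_sum, Complex.norm_conj]

lemma fourier_diff (S A₁ A₂ T B : Finset G) (hA : A₁.Nonempty) (r : ℕ) (M : ℝ)
    (hM : ∀ ψ : AddChar G ℂ, ‖mu T ψ‖ ^ (2 * r) * ‖1 - mu B ψ‖ ≤ M) :
    |(avg2 T)^[r] (avg A₁ (avg A₂ (ind S))) 0 - avg B ((avg2 T)^[r] (avg A₁ (avg A₂ (ind S)))) 0|
      ≤ M * Real.sqrt (S.card / A₁.card) := by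
  set g := avg A₁ (avg A₂ (ind S)) with hg
  have hM0 : 0 ≤ M := le_trans (by positivity) (hM 1)
  have hN : (0 : ℝ) < Fintype.card G := by exact_mod_cast Fintype.card_pos
  have hA0 : (0 : ℝ) < A₁.card := by exact_mod_cast hA.card_pos
  set c0 : AddChar G ℂ → ℂ := fun ψ => (∑ s ∈ S, ψ (-s)) * mu A₂ ψ * mu A₁ ψ with hc0
  have h0 : IsInv g c0 := ((isInv_ind S).avg A₂).avg A₁
  have hr : ∀ r : ℕ, IsInv ((avg2 T)^[r] g) (fun ψ => c0 ψ * (mu (-T) ψ * mu T ψ) ^ r) := by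
    intro r
    induction r with
    | zero => simpa using h0
    | succ r ih =>
      rw [Function.iterate_succ_apply']
      have := (ih.avg (-T)).avg T
      intro x
      rw [avg2, this x]
      congr 1
      refine sum_congr rfl fun ψ _ => ?_
      ring
  have h1 := hr r
  have h2 := h1.avg B
  have e : (((avg2 T)^[r] g 0 - avg B ((avg2 T)^[r] g) 0 : ℝ) : ℂ)
      = (∑ ψ, c0 ψ * (mu (-T) ψ * mu T ψ) ^ r * (1 - mu B ψ)) / Fintype.card G := by
    rw [Complex.ofReal_sub, h1 0, h2 0, ← sub_div, ← sum_sub_distrib]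
    congr 1
    refine sum_congr rfl fun ψ _ => ?_
    rw [AddChar.map_zero_eq_one]; ring
  rw [← Real.norm_eq_abs, ← Complex.norm_real, e, norm_div, Complex.norm_natCast, div_le_iff₀ hN]
  calc _ ≤ ∑ ψ : AddChar G ℂ, ‖c0 ψ * (mu (-T) ψ * mu T ψ) ^ r * (1 - mu B ψ)‖ := norm_sum_le _ _
    _ ≤ ∑ ψ : AddChar G ℂ, M * (‖∑ s ∈ -S, ψ s‖ * ‖∑ a ∈ A₁, ψ a‖ / A₁.card) := by
        refine sum_le_sum fun ψ _ => ?_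
        rw [norm_mul, norm_mul, norm_pow, norm_mul (mu (-T) ψ), norm_mu_neg, ← sq, ← pow_mul]
        have b1 : ‖c0 ψ‖ ≤ ‖∑ s ∈ -S, ψ s‖ * ‖∑ a ∈ A₁, ψ a‖ / A₁.card := by
          simp only [hc0]
          rw [norm_mul, norm_mul, sum_neg_index]
          have : ‖mu A₁ ψ‖ = ‖∑ a ∈ A₁, ψ a‖ / A₁.card := by
            unfold mu; rw [norm_div, Complex.norm_natCast]
          rw [this, mul_div_assoc]
          refine mul_le_mul_of_nonneg_right ?_ (by positivity)
          exact mul_le_of_le_one_right (norm_nonneg _) (norm_mu_le_one _ _)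
        calc _ = ‖c0 ψ‖ * (‖mu T ψ‖ ^ (2 * r) * ‖1 - mu B ψ‖) := by ring
          _ ≤ (‖∑ s ∈ -S, ψ s‖ * ‖∑ a ∈ A₁, ψ a‖ / A₁.card) * M :=
            mul_le_mul b1 (hM ψ) (by positivity) (by positivity)
          _ = _ := by ring
    _ = M / A₁.card * ∑ ψ : AddChar G ℂ, ‖∑ s ∈ -S, ψ s‖ * ‖∑ a ∈ A₁, ψ a‖ := by
        rw [mul_sum]; refine sum_congr rfl fun ψ _ => ?_; ring
    _ ≤ M / A₁.card * (Real.sqrt (∑ ψ : AddChar G ℂ, ‖∑ s ∈ -S, ψ s‖ ^ 2) *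
          Real.sqrt (∑ ψ : AddChar G ℂ, ‖∑ a ∈ A₁, ψ a‖ ^ 2)) := by
        refine mul_le_mul_of_nonneg_left ?_ (by positivity)
        exact Real.sum_mul_le_sqrt_mul_sqrt _ _ _
    _ = M * Real.sqrt (S.card / A₁.card) * Fintype.card G := by
        rw [parseval, parseval, card_neg, ← Real.sqrt_mul (by positivity)]
        have : (Fintype.card G * S.card * (Fintype.card G * A₁.card) : ℝ)
          = (S.card / A₁.card) * (Fintype.card G * A₁.card) ^ 2 := by field_simp
        rw [this, Real.sqrt_mul (by positivity), Real.sqrt_sq (by positivity)]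
        field_simp

end Avg
end KM

set_option linter.unusedSectionVars false
namespace KM
open Finset
open scoped Pointwise

section Chang
variable {G : Type*} [AddCommGroup G] [Fintype G] [DecidableEq G]

/-- Dissociativity relative to `B` at level `θ`. -/
def Diss (B : Finset G) (θ : ℝ) (Λ : Finset (AddChar G ℂ)) : Prop :=
  ∀ e : AddChar G ℂ → ℤ, (∀ ψ, e ψ ∈ ({-1, 0, 1} : Finset ℤ)) → (∃ ψ ∈ Λ, e ψ ≠ 0) →
    ‖mu B (∏ ψ ∈ Λ, ψ ^ e ψ)‖ ≤ θ

lemma riesz_bound (B : Finset G) (Λ : Finset (AddChar G ℂ)) (n : ℕ) (hn : Λ.card ≤ n)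
    (hd : Diss B ((1 / 2) ^ n) Λ) (c : AddChar G ℂ → ℂ) (hc : ∀ ψ, ‖c ψ‖ ≤ 1) :
    ∑ x ∈ B, ∏ ψ ∈ Λ, (1 + (1 / 8) * (c ψ * ψ x).re) ≤ 2 * B.card := by
  classical
  let E : Finset ℤ := {-1, 0, 1}
  let a : AddChar G ℂ → ℤ → ℂ := fun ψ e =>
    if e = 0 then 1 else if e = 1 then c ψ / 16 else (starRingEnd ℂ) (c ψ) / 16
  have ha0 : ∀ ψ, a ψ 0 = 1 := fun ψ => by simp [a]
  have factor : ∀ (ψ : AddChar G ℂ) (x : G), ((1 + (1 / 8) * (c ψ * ψ x).re : ℝ) : ℂ)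
      = ∑ e ∈ E, a ψ e * (ψ ^ e) x := by
    intro ψ x
    have hE : ∑ e ∈ E, a ψ e * (ψ ^ e) x = a ψ (-1) * (ψ ^ (-1 : ℤ)) x +
        (a ψ 0 * (ψ ^ (0 : ℤ)) x + a ψ 1 * (ψ ^ (1 : ℤ)) x) := by
      simp only [E]
      rw [sum_insert (by decide), sum_insert (by decide), sum_singleton]
    rw [hE]
    have h2 : (((c ψ * ψ x).re : ℝ) : ℂ) = (c ψ * ψ x + (starRingEnd ℂ) (c ψ * ψ x)) / 2 := by
      rw [Complex.re_eq_add_conj]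
    push_cast
    rw [h2, map_mul, ← AddChar.map_neg_eq_conj]
    simp [a]
    ring
  have hanorm : ∀ ψ, ∑ e ∈ E, ‖a ψ e‖ ≤ 2 := by
    intro ψ
    have h16 : ‖c ψ / 16‖ ≤ 1 / 16 := by
      rw [norm_div]; have := hc ψ; norm_num; linarith
    have h16' : ‖(starRingEnd ℂ) (c ψ) / 16‖ ≤ 1 / 16 := by
      rw [norm_div, Complex.norm_conj]; have := hc ψ; norm_num; linarith
    have : ∑ e ∈ E, ‖a ψ e‖ = ‖a ψ (-1)‖ + (‖a ψ 0‖ + ‖a ψ 1‖) := by simp [E]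
    rw [this]
    simp only [a]
    norm_num
    norm_num at h16 h16'
    linarith
  let P : Finset (Λ → ℤ) := Fintype.piFinset fun _ => E
  let χ : (Λ → ℤ) → AddChar G ℂ := fun p => ∏ ψ : Λ, (ψ : AddChar G ℂ) ^ p ψ
  have hexp : ((∑ x ∈ B, ∏ ψ ∈ Λ, (1 + (1 / 8) * (c ψ * ψ x).re) : ℝ) : ℂ)
      = ∑ p ∈ P, (∏ ψ : Λ, a ψ (p ψ)) * ∑ x ∈ B, χ p x := by
    rw [Complex.ofReal_sum]
    have : ∀ x ∈ B, ((∏ ψ ∈ Λ, (1 + (1 / 8) * (c ψ * ψ x).re) : ℝ) : ℂ)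
        = ∑ p ∈ P, (∏ ψ : Λ, a ψ (p ψ)) * χ p x := by
      intro x _
      rw [Complex.ofReal_prod, prod_congr rfl fun ψ _ => factor ψ x, ← prod_coe_sort, prod_univ_sum]
      refine sum_congr rfl fun p _ => ?_
      rw [prod_mul_distrib]
      congr 1
      simp only [χ, AddChar.prod_apply]
    rw [sum_congr rfl this, sum_comm]
    exact sum_congr rfl fun p _ => by rw [mul_sum]
  have h0P : (0 : Λ → ℤ) ∈ P := by
    simp only [P, Fintype.mem_piFinset]; intro ψ; simp [E]
  have hterm0 : (∏ ψ : Λ, a ψ ((0 : Λ → ℤ) ψ)) * ∑ x ∈ B, χ 0 x = B.card := by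
    simp [ha0, χ]
  have hterm : ∀ p ∈ P.erase 0, ‖(∏ ψ : Λ, a ψ (p ψ)) * ∑ x ∈ B, χ p x‖
      ≤ (∏ ψ : Λ, ‖a ψ (p ψ)‖) * ((1 / 2) ^ n * B.card) := by
    intro p hp
    rw [mem_erase] at hp
    rw [norm_mul, norm_prod]
    refine mul_le_mul_of_nonneg_left ?_ (prod_nonneg fun _ _ => norm_nonneg _)
    rcases B.eq_empty_or_nonempty with hB | hB
    · simp [hB]
    have hBc : (0 : ℝ) < B.card := by exact_mod_cast hB.card_pos
    let e : AddChar G ℂ → ℤ := fun ψ => if h : ψ ∈ Λ then p ⟨ψ, h⟩ else 0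
    have he : ∀ ψ, e ψ ∈ ({-1, 0, 1} : Finset ℤ) := by
      intro ψ
      by_cases h : ψ ∈ Λ
      · simp only [e, h, dite_true]
        have := hp.2
        simp only [P, Fintype.mem_piFinset] at this
        exact this ⟨ψ, h⟩
      · simp [e, h]
    have hne : ∃ ψ ∈ Λ, e ψ ≠ 0 := by
      by_contra! hcon
      apply hp.1
      funext ψ
      have := hcon ψ ψ.2
      simpa [e] using this
    have := hd e he hne
    have heq : ∏ ψ ∈ Λ, ψ ^ e ψ = χ p := by
      rw [← prod_coe_sort]
      refine prod_congr rfl fun ψ _ => ?_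
      simp [e]
    rw [heq, mu, norm_div, Complex.norm_natCast, div_le_iff₀ hBc] at this
    exact this
  have hsum : ∑ p ∈ P, ∏ ψ : Λ, ‖a ψ (p ψ)‖ ≤ 2 ^ n := by
    have := prod_univ_sum (fun _ : Λ => E) (fun (ψ : Λ) e => ‖a ψ e‖)
    rw [← this]
    calc _ ≤ ∏ ψ : Λ, (2 : ℝ) := prod_le_prod (fun _ _ => sum_nonneg fun _ _ => norm_nonneg _)
            fun ψ _ => hanorm ψ
      _ = 2 ^ Λ.card := by simp
      _ ≤ 2 ^ n := pow_le_pow_right₀ (by norm_num) hn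
  rw [← add_sum_erase _ _ h0P, hterm0] at hexp
  have hre : (∑ x ∈ B, ∏ ψ ∈ Λ, (1 + (1 / 8) * (c ψ * ψ x).re) : ℝ) =
      B.card + (∑ p ∈ P.erase 0, (∏ ψ : Λ, a ψ (p ψ)) * ∑ x ∈ B, χ p x).re := by
    have := congrArg Complex.re hexp
    rw [Complex.ofReal_re, Complex.add_re, Complex.natCast_re] at this
    exact this
  rw [hre]
  have hb : (∑ p ∈ P.erase 0, (∏ ψ : Λ, a ψ (p ψ)) * ∑ x ∈ B, χ p x).re ≤ B.card := by
    calc _ ≤ ‖∑ p ∈ P.erase 0, (∏ ψ : Λ, a ψ (p ψ)) * ∑ x ∈ B, χ p x‖ := Complex.re_le_norm _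
      _ ≤ ∑ p ∈ P.erase 0, ‖(∏ ψ : Λ, a ψ (p ψ)) * ∑ x ∈ B, χ p x‖ := norm_sum_le _ _
      _ ≤ ∑ p ∈ P.erase 0, (∏ ψ : Λ, ‖a ψ (p ψ)‖) * ((1 / 2) ^ n * B.card) := sum_le_sum hterm
      _ ≤ ∑ p ∈ P, (∏ ψ : Λ, ‖a ψ (p ψ)‖) * ((1 / 2) ^ n * B.card) :=
          sum_le_sum_of_subset_of_nonneg (erase_subset _ _) fun _ _ _ =>
            mul_nonneg (prod_nonneg fun _ _ => norm_nonneg _) (by positivity)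
      _ = (∑ p ∈ P, ∏ ψ : Λ, ‖a ψ (p ψ)‖) * ((1 / 2) ^ n * B.card) := by rw [sum_mul]
      _ ≤ 2 ^ n * ((1 / 2) ^ n * B.card) := mul_le_mul_of_nonneg_right hsum (by positivity)
      _ = B.card := by rw [← mul_assoc, ← mul_pow]; norm_num
  linarith

lemma one_add_ge_exp {y : ℝ} (hy : |y| ≤ 1 / 8) : Real.exp (y - 1 / 32) ≤ 1 + y := by
  rw [abs_le] at hy
  have hpos : 0 < 1 + y := by linarith
  rw [← Real.le_log_iff_exp_le hpos]
  have := Real.one_sub_inv_le_log_of_pos hpos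
  refine le_trans ?_ this
  have : 1 - (1 + y)⁻¹ = y / (1 + y) := by field_simp; ring
  rw [this, le_div_iff₀ hpos]
  nlinarith

lemma chang_bound (B T : Finset G) (hTB : T ⊆ B) (hT : T.Nonempty) (σ : ℝ)
    (hσ : σ * B.card ≤ T.card) (Λ : Finset (AddChar G ℂ)) (n : ℕ) (hn : Λ.card ≤ n)
    (hd : Diss B ((1 / 2) ^ n) Λ) (hspec : ∀ ψ ∈ Λ, 1 / 2 ≤ ‖mu T ψ‖) :
    σ * Real.exp (Λ.card / 32) ≤ 2 := by
  have hTc : (0 : ℝ) < T.card := by exact_mod_cast hT.card_pos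
  have hBc : (0 : ℝ) < B.card := by exact_mod_cast (hT.mono hTB).card_pos
  let c : AddChar G ℂ → ℂ := fun ψ => (starRingEnd ℂ) (mu T ψ) / ‖mu T ψ‖
  have hc : ∀ ψ, ‖c ψ‖ ≤ 1 := by
    intro ψ
    simp only [c]
    rw [norm_div, Complex.norm_conj, Complex.norm_real, norm_norm]
    exact div_self_le_one _
  let y : AddChar G ℂ → G → ℝ := fun ψ x => (1 / 8) * (c ψ * ψ x).re
  have hy : ∀ ψ x, |y ψ x| ≤ 1 / 8 := by
    intro ψ x
    simp only [y]
    rw [abs_mul, abs_of_pos (by norm_num : (0 : ℝ) < 1 / 8)]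
    have h1 : |(c ψ * ψ x).re| ≤ 1 := by
      refine (Complex.abs_re_le_norm _).trans ?_
      rw [norm_mul, AddChar.norm_apply, mul_one]; exact hc ψ
    linarith
  have hR := riesz_bound B Λ n hn hd c hc
  have hpos : ∀ x, 0 ≤ ∏ ψ ∈ Λ, (1 + (1 / 8) * (c ψ * ψ x).re) := by
    intro x
    refine prod_nonneg fun ψ _ => ?_
    have := abs_le.1 (hy ψ x)
    simp only [y] at this
    linarith
  let u : G → ℝ := fun x => ∑ ψ ∈ Λ, (y ψ x - 1 / 32)
  have hexp : ∀ x, Real.exp (u x) ≤ ∏ ψ ∈ Λ, (1 + (1 / 8) * (c ψ * ψ x).re) := by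
    intro x
    simp only [u]
    rw [Real.exp_sum]
    exact prod_le_prod (fun _ _ => (Real.exp_pos _).le) fun ψ _ => one_add_ge_exp (hy ψ x)
  have hsumu : T.card * ((Λ.card : ℝ) / 32) ≤ ∑ x ∈ T, u x := by
    simp only [u]
    rw [sum_comm]
    have : ∀ ψ ∈ Λ, (T.card : ℝ) / 32 ≤ ∑ x ∈ T, (y ψ x - 1 / 32) := by
      intro ψ hψ
      have hs := hspec ψ hψ
      have hne : (‖mu T ψ‖ : ℂ) ≠ 0 := by
        have : (0:ℝ) < ‖mu T ψ‖ := by linarith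
        exact_mod_cast this.ne'
      have e1 : ∑ x ∈ T, (c ψ * ψ x).re = T.card * ‖mu T ψ‖ := by
        rw [← Complex.re_sum, ← mul_sum]
        have : ∑ x ∈ T, ψ x = T.card * mu T ψ := by
          have hTc' : (T.card : ℂ) ≠ 0 := by exact_mod_cast hT.card_pos.ne'
          unfold mu; field_simp
        rw [this]
        have h3 : c ψ * (T.card * mu T ψ) = ((T.card * ‖mu T ψ‖ : ℝ) : ℂ) := by
          simp only [c]
          have h4 := Complex.conj_mul' (mu T ψ)
          push_cast
          field_simp
          linear_combination (T.card : ℂ) * h4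
        rw [h3, Complex.ofReal_re]
      simp only [y]
      rw [sum_sub_distrib, ← mul_sum, e1, sum_const, nsmul_eq_mul]
      nlinarith
    calc T.card * ((Λ.card : ℝ) / 32) = ∑ ψ ∈ Λ, (T.card : ℝ) / 32 := by
          rw [sum_const, nsmul_eq_mul]; ring
      _ ≤ _ := sum_le_sum this
  set w : ℝ := (Λ.card : ℝ) / 32 with hw
  have hJ : T.card * Real.exp w ≤ ∑ x ∈ T, Real.exp (u x) := by
    have : ∀ x ∈ T, Real.exp w * (1 + (u x - w)) ≤ Real.exp (u x) := by
      intro x _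
      have h1 := Real.add_one_le_exp (u x - w)
      have h2 : Real.exp (u x) = Real.exp w * Real.exp (u x - w) := by
        rw [← Real.exp_add]; congr 1; ring
      rw [h2]
      exact mul_le_mul_of_nonneg_left (by linarith) (Real.exp_pos _).le
    refine le_trans ?_ (sum_le_sum this)
    rw [← mul_sum, sum_add_distrib, sum_sub_distrib, sum_const, sum_const, nsmul_eq_mul, nsmul_eq_mul]
    nlinarith [Real.exp_pos w]
  have hfin : σ * B.card * Real.exp w ≤ 2 * B.card := by
    calc _ ≤ T.card * Real.exp w := mul_le_mul_of_nonneg_right hσ (Real.exp_pos _).le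
      _ ≤ ∑ x ∈ T, Real.exp (u x) := hJ
      _ ≤ ∑ x ∈ T, ∏ ψ ∈ Λ, (1 + (1 / 8) * (c ψ * ψ x).re) := sum_le_sum fun x _ => hexp x
      _ ≤ ∑ x ∈ B, ∏ ψ ∈ Λ, (1 + (1 / 8) * (c ψ * ψ x).re) :=
          sum_le_sum_of_subset_of_nonneg hTB fun x _ _ => hpos x
      _ ≤ _ := hR
  by_contra! hcon
  nlinarith

lemma chang (B T : Finset G) (hTB : T ⊆ B) (hT : T.Nonempty) (σ : ℝ)
    (hσ : σ * B.card ≤ T.card) (n : ℕ) (hn1 : 1 ≤ n) (hn : 2 < σ * Real.exp (n / 32)) :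
    ∃ Λ : Finset (AddChar G ℂ), Λ.card ≤ n ∧ ∀ ψ : AddChar G ℂ, 1 / 2 ≤ ‖mu T ψ‖ →
      ∃ (ζ : AddChar G ℂ) (e : AddChar G ℂ → ℤ), (∀ ψ, e ψ ∈ ({-1, 0, 1} : Finset ℤ)) ∧
        (1 / 2) ^ n < ‖mu B ζ‖ ∧ ψ = ζ * ∏ l ∈ Λ, l ^ e l := by
  classical
  have hBc : (B.card : ℂ) ≠ 0 := by exact_mod_cast (hT.mono hTB).card_pos.ne'
  have hone : (1 / 2 : ℝ) ^ n < ‖mu B (1 : AddChar G ℂ)‖ := by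
    have : mu B (1 : AddChar G ℂ) = 1 := by simp [mu, hBc]
    rw [this, norm_one]
    exact pow_lt_one₀ (by norm_num) (by norm_num) (by omega)
  let F : Finset (Finset (AddChar G ℂ)) := univ.filter fun Λ =>
    Λ.card ≤ n ∧ Diss B ((1 / 2) ^ n) Λ ∧ ∀ ψ ∈ Λ, 1 / 2 ≤ ‖mu T ψ‖
  have hF : F.Nonempty := ⟨∅, by simp [F, Diss]⟩
  obtain ⟨Λ, hΛ, hmax⟩ := exists_max_image F (fun Λ => Λ.card) hF
  simp only [F, mem_filter, mem_univ, true_and] at hΛ hmax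
  obtain ⟨hcard, hdiss, hsp⟩ := hΛ
  have hb := chang_bound B T hTB hT σ hσ Λ n hcard hdiss hsp
  have hσ0 : 0 < σ := by
    by_contra! h
    nlinarith [Real.exp_pos ((n : ℝ) / 32)]
  have hlt : Λ.card < n := by
    by_contra! h
    have : Real.exp ((n : ℝ) / 32) ≤ Real.exp (Λ.card / 32) := by
      apply Real.exp_le_exp.2
      have : (n : ℝ) ≤ Λ.card := by exact_mod_cast h
      linarith
    nlinarith
  refine ⟨Λ, hcard, fun ψ hψ => ?_⟩
  by_cases hmem : ψ ∈ Λ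
  · refine ⟨1, fun l => if l = ψ then 1 else 0, fun l => by dsimp only; split_ifs <;> simp, hone, ?_⟩
    rw [one_mul, prod_eq_single ψ]
    · simp
    · intro b _ hb; simp [hb]
    · intro h; exact absurd hmem h
  · have hnd : ¬ Diss B ((1 / 2) ^ n) (insert ψ Λ) := by
      intro hd
      have := hmax (insert ψ Λ) ⟨by rw [card_insert_of_notMem hmem]; omega, hd, by
        intro l hl
        rcases mem_insert.1 hl with rfl | h
        · exact hψ
        · exact hsp l h⟩
      rw [card_insert_of_notMem hmem] at this
      omega
    unfold Diss at hnd
    push Not at hnd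
    obtain ⟨e, he, ⟨l, hl, hle⟩, hlt⟩ := hnd
    rw [prod_insert hmem] at hlt
    have heψ : e ψ ≠ 0 := by
      intro h0
      have hlΛ : l ∈ Λ := by
        rcases mem_insert.1 hl with rfl | h
        · exact absurd h0 hle
        · exact h
      have := hdiss e he ⟨l, hlΛ, hle⟩
      rw [h0, zpow_zero, one_mul] at hlt
      linarith
    have hpm : e ψ = -1 ∨ e ψ = 1 := by
      have := he ψ; simp at this; tauto
    rcases hpm with h | h
    · refine ⟨(ψ ^ e ψ * ∏ l ∈ Λ, l ^ e l)⁻¹, e, he, ?_, ?_⟩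
      · have : ‖mu B (ψ ^ e ψ * ∏ l ∈ Λ, l ^ e l)⁻¹‖ = ‖mu B (ψ ^ e ψ * ∏ l ∈ Λ, l ^ e l)‖ := by
          unfold mu
          rw [norm_div, norm_div]
          congr 1
          simp only [AddChar.inv_apply, AddChar.map_neg_eq_conj]
          rw [← map_sum, Complex.norm_conj]
        rw [this]; exact hlt
      · rw [h]; simp
    · refine ⟨ψ ^ e ψ * ∏ l ∈ Λ, l ^ e l, fun l => - e l, ?_, hlt, ?_⟩
      · intro l; have := he l; simp at this ⊢; omega
      · rw [h]; simp

/-- If `ζ` has a large coefficient on a regular Bohr set then it is nearly constant on a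
small dilate. -/
lemma char_small_of_reg {κ : ℝ} {m : ℕ} {Γ : Finset (AddChar G ℂ)} {ρ : ℝ} (hκ : 0 ≤ κ) (hκ1 : κ ≤ 1)
    (hρ : 0 < ρ) (hreg : Reg κ m Γ ρ) (ζ : AddChar G ℂ) (x : G) (hx : x ∈ bohr Γ (κ * ρ)) :
    ‖mu (bohr Γ ρ) ζ‖ * ‖1 - ζ x‖ ≤ 2 / m := by
  set B := bohr Γ ρ with hB
  have hκρ : 0 ≤ κ * ρ := by positivity
  have hBc : (0 : ℝ) < B.card := by exact_mod_cast bohr_card_pos Γ hρ.le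
  set B' := bohr Γ (ρ - κ * ρ) with hB'
  have hsub : B' ⊆ B := bohr_mono Γ (by linarith)
  have hcardle : (B.card : ℝ) - B'.card ≤ B.card / m := by
    have h1 : (B.card : ℝ) ≤ (bohr Γ (ρ + κ * ρ)).card := by
      exact_mod_cast card_le_card (bohr_mono Γ (by linarith))
    have h2 : (B'.card : ℝ) ≤ B.card := by exact_mod_cast card_le_card hsub
    unfold Reg at hreg
    have h3 : (1 / m : ℝ) * B'.card ≤ 1 / m * B.card := mul_le_mul_of_nonneg_left h2 (by positivity)
    have h4 : (1 / m : ℝ) * B.card = B.card / m := by ring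
    nlinarith
  let Bx : Finset G := B.map (addRightEmbedding x)
  have hBx : ∑ y ∈ Bx, ζ y = (∑ y ∈ B, ζ y) * ζ x := by
    simp [Bx, AddChar.map_add_eq_mul, sum_mul]
  have hsub2 : B' ⊆ Bx := by
    intro y hy
    simp only [Bx, mem_map, addRightEmbedding_apply]
    exact ⟨y - x, sub_mem_bohr hy hx (by linarith), by abel⟩
  have hcx : Bx.card = B.card := card_map _
  have d1 : ‖∑ y ∈ B, ζ y - ∑ y ∈ B', ζ y‖ ≤ B.card / m := by
    rw [← sum_sdiff hsub, add_sub_cancel_right]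
    calc _ ≤ ∑ y ∈ B \ B', ‖ζ y‖ := norm_sum_le _ _
      _ = ((B \ B').card : ℝ) := by simp [AddChar.norm_apply]
      _ = (B.card : ℝ) - B'.card := by rw [cast_card_sdiff hsub]
      _ ≤ _ := hcardle
  have d2 : ‖∑ y ∈ Bx, ζ y - ∑ y ∈ B', ζ y‖ ≤ B.card / m := by
    rw [← sum_sdiff hsub2, add_sub_cancel_right]
    calc _ ≤ ∑ y ∈ Bx \ B', ‖ζ y‖ := norm_sum_le _ _
      _ = ((Bx \ B').card : ℝ) := by simp [AddChar.norm_apply]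
      _ = (B.card : ℝ) - B'.card := by rw [cast_card_sdiff hsub2, hcx]
      _ ≤ _ := hcardle
  have d3 : ‖∑ y ∈ B, ζ y - ∑ y ∈ Bx, ζ y‖ ≤ 2 / m * B.card := by
    have := norm_sub_le (∑ y ∈ B, ζ y - ∑ y ∈ B', ζ y) (∑ y ∈ Bx, ζ y - ∑ y ∈ B', ζ y)
    rw [sub_sub_sub_cancel_right] at this
    have e : (2 / m : ℝ) * B.card = B.card / m + B.card / m := by ring
    linarith
  rw [hBx] at d3
  have e : ∑ y ∈ B, ζ y - (∑ y ∈ B, ζ y) * ζ x = (∑ y ∈ B, ζ y) * (1 - ζ x) := by ring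
  rw [e, norm_mul] at d3
  unfold mu
  rw [norm_div, Complex.norm_natCast, div_mul_eq_mul_div, div_le_iff₀ hBc]
  exact d3

lemma norm_one_sub_zpow (e : ℤ) (he : e ∈ ({-1, 0, 1} : Finset ℤ)) (l : AddChar G ℂ) (x : G) :
    ‖1 - (l ^ e) x‖ ≤ ‖1 - l x‖ := by
  simp at he
  rcases he with rfl | rfl | rfl
  · simp only [zpow_neg, zpow_one, AddChar.inv_apply, AddChar.map_neg_eq_conj]
    have : 1 - (starRingEnd ℂ) (l x) = (starRingEnd ℂ) (1 - l x) := by simp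
    rw [this, Complex.norm_conj]
  · simp
  · simp

lemma norm_one_sub_prod (Λ : Finset (AddChar G ℂ)) (e : AddChar G ℂ → ℤ)
    (he : ∀ ψ, e ψ ∈ ({-1, 0, 1} : Finset ℤ)) (x : G) (ε : ℝ) (h : ∀ l ∈ Λ, ‖1 - l x‖ ≤ ε) :
    ‖1 - (∏ l ∈ Λ, l ^ e l) x‖ ≤ Λ.card * ε := by
  classical
  induction Λ using Finset.induction_on with
  | empty => simp
  | insert a s ha ih =>
    rw [prod_insert ha, AddChar.mul_apply, card_insert_of_notMem ha]
    have i1 := ih fun l hl => h l (mem_insert_of_mem hl)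
    have i2 := (norm_one_sub_zpow (e a) (he a) a x).trans (h a (mem_insert_self _ _))
    have e1 : 1 - (a ^ e a) x * (∏ l ∈ s, l ^ e l) x =
      (1 - (a ^ e a) x) + (a ^ e a) x * (1 - (∏ l ∈ s, l ^ e l) x) := by ring
    rw [e1]
    refine (norm_add_le _ _).trans ?_
    rw [norm_mul, AddChar.norm_apply, one_mul, Nat.cast_add, Nat.cast_one]
    linarith

end Chang
end KM

set_option linter.unusedSectionVars false
namespace KM
open Finset
open scoped Pointwise

section Sift
variable {G : Type*} [AddCommGroup G] [Fintype G] [DecidableEq G]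

/-- Unnormalised convolution square. -/
def conv (f : G → ℝ) (x : G) : ℝ := ∑ y, f y * f (x - y)
/-- Unnormalised autocorrelation. -/
def corr (f : G → ℝ) (x : G) : ℝ := ∑ y, f (x + y) * f y

lemma corr_shift (f : G → ℝ) (d d' : G) : corr f (d - d') = ∑ b, f (b + d) * f (b + d') := by
  unfold corr
  rw [← Equiv.sum_comp (Equiv.addRight d')]
  refine sum_congr rfl fun b _ => ?_
  simp only [Equiv.coe_addRight]
  congr 2; abel

lemma moment_eq (f : G → ℝ) (w : G → G → ℝ) (D : Finset G) (k : ℕ)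
    (hw : ∀ d d', w d d' = ∑ b, f (b + d) * f (b + d')) :
    ∑ d ∈ D, ∑ d' ∈ D, w d d' ^ k = ∑ b : Fin k → G, (∑ d ∈ D, ∏ i, f (b i + d)) ^ 2 := by
  have : ∀ d d', w d d' ^ k = ∑ b : Fin k → G, (∏ i, f (b i + d)) * ∏ i, f (b i + d') := by
    intro d d'
    rw [hw, Fintype.sum_pow]
    exact sum_congr rfl fun b _ => prod_mul_distrib
  simp only [this]
  simp only [sq, sum_mul_sum]
  rw [sum_congr rfl fun d _ => sum_comm, sum_comm]

lemma corr_moment (f : G → ℝ) (D : Finset G) (k : ℕ) :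
    ∑ d ∈ D, ∑ d' ∈ D, corr f (d - d') ^ k
      = ∑ b : Fin k → G, (∑ d ∈ D, ∏ i, f (b i + d)) ^ 2 :=
  moment_eq f (fun d d' => corr f (d - d')) D k fun d d' => corr_shift f d d'

lemma corr_moment_nonneg (f : G → ℝ) (D : Finset G) (k : ℕ) :
    0 ≤ ∑ d ∈ D, ∑ d' ∈ D, corr f (d - d') ^ k := by
  rw [corr_moment]; exact sum_nonneg fun _ _ => sq_nonneg _

lemma conv_le_corr (f : G → ℝ) (D : Finset G) (s : G) (k : ℕ) :
    ∑ d ∈ D, ∑ d' ∈ D, conv f (s + (d - d')) ^ k ≤ ∑ d ∈ D, ∑ d' ∈ D, corr f (d - d') ^ k := by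
  have e1 : ∑ d ∈ D, ∑ d' ∈ D, conv f (s + (d - d')) ^ k =
      ∑ b : Fin k → G, (∑ d ∈ D, ∏ i, f (b i + d)) * (∑ d ∈ D, ∏ i, f (s - d - b i)) := by
    have : ∀ d d', conv f (s + (d - d')) ^ k =
        ∑ b : Fin k → G, (∏ i, f (b i + d)) * ∏ i, f (s - d' - b i) := by
      intro d d'
      have : conv f (s + (d - d')) = ∑ b, f (b + d) * f (s - d' - b) := by
        unfold conv
        rw [← Equiv.sum_comp (Equiv.addRight d)]
        refine sum_congr rfl fun b _ => ?_
        simp only [Equiv.coe_addRight]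
        congr 2; abel
      rw [this, Fintype.sum_pow]
      exact sum_congr rfl fun b _ => prod_mul_distrib
    simp only [this, sum_mul_sum]
    rw [sum_congr rfl fun d _ => sum_comm, sum_comm]
  have e2 : ∑ d ∈ D, ∑ d' ∈ D, corr f (d - d') ^ k =
      ∑ b : Fin k → G, (∑ d ∈ D, ∏ i, f (s - d - b i)) ^ 2 := by
    have : ∀ d d', corr f (d' - d) ^ k =
        ∑ b : Fin k → G, (∏ i, f (s - d - b i)) * ∏ i, f (s - d' - b i) := by
      intro d d'
      have : corr f (d' - d) = ∑ b, f (s - d - b) * f (s - d' - b) := by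
        unfold corr
        rw [← Equiv.sum_comp (Equiv.subLeft (s - d'))]
        refine sum_congr rfl fun b _ => ?_
        simp only [Equiv.subLeft_apply]
        congr 2; abel
      rw [this, Fintype.sum_pow]
      exact sum_congr rfl fun b _ => prod_mul_distrib
    rw [sum_comm]
    simp only [this, sq, sum_mul_sum]
    rw [sum_congr rfl fun d _ => sum_comm, sum_comm]
  have e3 := corr_moment f D k
  have : ∑ b : Fin k → G, (∑ d ∈ D, ∏ i, f (b i + d)) * (∑ d ∈ D, ∏ i, f (s - d - b i)) ≤
      ∑ b : Fin k → G, ((∑ d ∈ D, ∏ i, f (b i + d)) ^ 2 + (∑ d ∈ D, ∏ i, f (s - d - b i)) ^ 2) / 2 := by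
    refine sum_le_sum fun b _ => ?_
    nlinarith [sq_nonneg ((∑ d ∈ D, ∏ i, f (b i + d)) - (∑ d ∈ D, ∏ i, f (s - d - b i)))]
  rw [← sum_div, sum_add_distrib, ← e2, ← e3] at this
  rw [e1]; linarith

lemma three_pow_le_choose (p : ℕ) : 3 ^ p ≤ (3 * p).choose p := by
  induction p with
  | zero => simp
  | succ p ih =>
    have h1 := Nat.add_one_mul_choose_eq (3 * p + 2) p
    have h3 : (3 * p + 1).choose p * (3 * p + 2) = (3 * p + 2).choose p * (2 * p + 2) := by
      have := Nat.choose_mul_succ_eq (3 * p + 1) p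
      rw [show 3 * p + 1 + 1 - p = 2 * p + 2 by omega] at this
      exact this
    have h4 : (3 * p).choose p * (3 * p + 1) = (3 * p + 1).choose p * (2 * p + 1) := by
      have := Nat.choose_mul_succ_eq (3 * p) p
      rw [show 3 * p + 1 - p = 2 * p + 1 by omega] at this
      exact this
    have e : 3 * (p + 1) = 3 * p + 2 + 1 := by ring
    rw [e, pow_succ]
    have h5 : (3 * p + 2 + 1).choose (p + 1) = 3 * (3 * p + 2).choose p := by
      have : (p + 1) * ((3 * p + 2 + 1).choose (p + 1)) = (p + 1) * (3 * (3 * p + 2).choose p) := by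
        nlinarith
      exact Nat.eq_of_mul_eq_mul_left (by omega) this
    rw [h5]
    have h6 : (3 * p).choose p ≤ (3 * p + 2).choose p := Nat.choose_le_choose p (by omega)
    omega

lemma unbalance {ι : Type*} (P : Finset ι) (g h : ι → ℝ) (p : ℕ) (hp : Even p) (hp1 : 6 ≤ p)
    (hg : ∀ k, 0 ≤ ∑ i ∈ P, g i ^ k) (hgp : (4 / 5 : ℝ) ^ p * P.card ≤ ∑ i ∈ P, g i ^ p)
    (hh0 : ∀ i ∈ P, 0 ≤ h i) (hh : ∀ i ∈ P, |h i - (1 + g i)| ≤ 1 / 60) :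
    (5 / 4 : ℝ) ^ (3 * p) * P.card ≤ ∑ i ∈ P, h i ^ (3 * p) := by
  have h1 : (12 / 5 : ℝ) ^ p * P.card ≤ ∑ i ∈ P, (1 + g i) ^ (3 * p) := by
    have e : ∑ i ∈ P, (1 + g i) ^ (3 * p) =
        ∑ k ∈ range (3 * p + 1), (∑ i ∈ P, g i ^ k) * ((3 * p).choose k : ℝ) := by
      simp only [add_comm (1 : ℝ), add_pow, one_pow, mul_one]
      rw [sum_comm]
      exact sum_congr rfl fun k _ => by rw [sum_mul]
    rw [e]
    have := single_le_sum (f := fun k => (∑ i ∈ P, g i ^ k) * ((3 * p).choose k : ℝ))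
      (s := range (3 * p + 1)) (fun k _ => mul_nonneg (hg k) (by positivity))
      (mem_range.2 (by omega : p < 3 * p + 1))
    refine le_trans ?_ this
    have h3 : (3 : ℝ) ^ p ≤ ((3 * p).choose p : ℝ) := by exact_mod_cast three_pow_le_choose p
    calc (12 / 5 : ℝ) ^ p * P.card = ((4 / 5 : ℝ) ^ p * P.card) * 3 ^ p := by
          rw [show (12 / 5 : ℝ) = 4 / 5 * 3 by norm_num, mul_pow]; ring
      _ ≤ (∑ i ∈ P, g i ^ p) * 3 ^ p := mul_le_mul_of_nonneg_right hgp (by positivity)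
      _ ≤ _ := mul_le_mul_of_nonneg_left h3 (hg p)
  have hq : Even (3 * p) := hp.mul_left 3
  have h2 : ∀ i ∈ P, (1 + g i) ^ (3 * p) ≤
      (76 / 75 : ℝ) ^ (3 * p) * (h i ^ (3 * p) + (5 / 4) ^ (3 * p)) := by
    intro i hi
    have ha := abs_le.1 (hh i hi)
    have h0 := hh0 i hi
    have hb : |1 + g i| ≤ h i + 1 / 60 := by rw [abs_le]; constructor <;> linarith
    have hb' : (1 + g i) ^ (3 * p) ≤ (h i + 1 / 60) ^ (3 * p) := by
      rw [← hq.pow_abs]; exact pow_le_pow_left₀ (abs_nonneg _) hb _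
    refine hb'.trans ?_
    rcases le_total (h i) (5 / 4) with hc | hc
    · calc (h i + 1 / 60) ^ (3 * p) ≤ (76 / 75 * (5 / 4)) ^ (3 * p) :=
            pow_le_pow_left₀ (by linarith) (by linarith) _
        _ = (76 / 75) ^ (3 * p) * (5 / 4) ^ (3 * p) := mul_pow _ _ _
        _ ≤ _ := by
          apply mul_le_mul_of_nonneg_left _ (by positivity)
          have := pow_nonneg h0 (3 * p); linarith
    · calc (h i + 1 / 60) ^ (3 * p) ≤ (76 / 75 * (h i)) ^ (3 * p) :=
            pow_le_pow_left₀ (by linarith) (by linarith) _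
        _ = (76 / 75) ^ (3 * p) * (h i) ^ (3 * p) := mul_pow _ _ _
        _ ≤ _ := by
          apply mul_le_mul_of_nonneg_left _ (by positivity)
          have : (0 : ℝ) ≤ (5 / 4) ^ (3 * p) := by positivity
          linarith
  have h3 := h1.trans (sum_le_sum h2)
  rw [← mul_sum, sum_add_distrib, sum_const, nsmul_eq_mul] at h3
  have h4 : (76 / 75 : ℝ) ^ (3 * p) * (13 / 10) ^ (3 * p) ≤ (12 / 5) ^ p := by
    rw [← mul_pow, pow_mul]; exact pow_le_pow_left₀ (by positivity) (by norm_num) _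
  have h5 : (2 : ℝ) * (5 / 4) ^ (3 * p) ≤ (13 / 10) ^ (3 * p) := by
    have e : (13 / 10 : ℝ) ^ (3 * p) = (26 / 25) ^ (3 * p) * (5 / 4) ^ (3 * p) := by
      rw [← mul_pow]; norm_num
    rw [e]
    apply mul_le_mul_of_nonneg_right _ (by positivity)
    calc (2 : ℝ) ≤ (26 / 25) ^ 18 := by norm_num
      _ ≤ _ := pow_le_pow_right₀ (by norm_num) (by omega)
  have hc : (0 : ℝ) ≤ P.card := by positivity
  have h6 : (76 / 75 : ℝ) ^ (3 * p) * ((13 / 10) ^ (3 * p) * P.card) ≤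
      (76 / 75) ^ (3 * p) * (∑ i ∈ P, h i ^ (3 * p) + P.card * (5 / 4) ^ (3 * p)) := by
    rw [← mul_assoc]
    exact (mul_le_mul_of_nonneg_right h4 hc).trans h3
  have h7 := le_of_mul_le_mul_left h6 (by positivity)
  have h8 := mul_le_mul_of_nonneg_right h5 hc
  linarith

lemma corr_ind_nonneg (A : Finset G) (x : G) : 0 ≤ corr (ind A) x :=
  sum_nonneg fun _ _ => mul_nonneg (ind_nonneg _ _) (ind_nonneg _ _)

lemma sift (A D : Finset G) (hD : D.Nonempty) (q : ℕ) (V W τ η : ℝ) (hV0 : 0 < V) (hW : 0 ≤ W)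
    (hη : 0 < η) (hτ : 0 < τ)
    (hV : V ^ q * (D.card : ℝ) ^ 2 ≤ ∑ d ∈ D, ∑ d' ∈ D, corr (ind A) (d - d') ^ q)
    (h1 : τ * (A.card : ℝ) ^ q ≤ V ^ q / 4) (h2 : W ^ q ≤ η * V ^ q / 2) :
    ∃ A' ⊆ D, A'.Nonempty ∧ τ * D.card ≤ A'.card ∧
      ∑ d ∈ A', ∑ d' ∈ A', (if corr (ind A) (d - d') < W then (1 : ℝ) else 0)
        ≤ η * (A'.card : ℝ) ^ 2 := by
  classical
  by_contra! hcon
  let Db : (Fin q → G) → Finset G := fun b => D.filter fun d => ∀ i, b i + d ∈ A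
  have hprod : ∀ (b : Fin q → G) (d : G), ∏ i : Fin q, ind A (b i + d) = if ∀ i, b i + d ∈ A then 1 else 0 := by
    intro b d
    split_ifs with h
    · exact prod_eq_one fun i _ => by simp [ind, h i]
    · push Not at h
      obtain ⟨i, hi⟩ := h
      exact prod_eq_zero (mem_univ i) (by simp [ind, hi])
  have hcard : ∀ b, ((Db b).card : ℝ) = ∑ d ∈ D, ∏ i : Fin q, ind A (b i + d) := by
    intro b
    simp only [hprod, Db]
    rw [card_filter]; push_cast; rfl
  have hS1 : ∑ b, ((Db b).card : ℝ) = D.card * (A.card : ℝ) ^ q := by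
    simp only [hcard]
    rw [sum_comm]
    have : ∀ d ∈ D, ∑ b : Fin q → G, ∏ i : Fin q, ind A (b i + d) = (A.card : ℝ) ^ q := by
      intro d _
      rw [← Fintype.sum_pow (fun a => ind A (a + d))]
      congr 1
      refine (Equiv.sum_comp (Equiv.addRight d) (fun a => ind A a)).trans ?_
      simp [ind]
    rw [sum_congr rfl this, sum_const, nsmul_eq_mul]
  have hS2 : ∑ b, ((Db b).card : ℝ) ^ 2 = ∑ d ∈ D, ∑ d' ∈ D, corr (ind A) (d - d') ^ q := by
    rw [corr_moment]
    exact sum_congr rfl fun b _ => by rw [hcard]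
  let bad : (Fin q → G) → ℝ := fun b =>
    ∑ d ∈ Db b, ∑ d' ∈ Db b, (if corr (ind A) (d - d') < W then (1 : ℝ) else 0)
  have hbad0 : ∀ b, 0 ≤ bad b := fun b => sum_nonneg fun _ _ => sum_nonneg fun _ _ => by
    split_ifs <;> norm_num
  have hS3 : ∑ b, bad b ≤ W ^ q * (D.card : ℝ) ^ 2 := by
    have e : ∀ b, bad b = ∑ d ∈ D, ∑ d' ∈ D, (if corr (ind A) (d - d') < W then
        (∏ i : Fin q, ind A (b i + d)) * ∏ i : Fin q, ind A (b i + d') else 0) := by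
      intro b
      simp only [bad, Db]
      rw [sum_filter]
      refine sum_congr rfl fun d _ => ?_
      rw [sum_filter]
      simp only [hprod]
      split_ifs with h
      · refine sum_congr rfl fun d' _ => ?_
        split_ifs <;> simp
      · symm; apply sum_eq_zero; intro d' _
        simp
    simp only [e]
    rw [sum_comm]
    have : ∀ d ∈ D, ∑ b : Fin q → G, ∑ d' ∈ D, (if corr (ind A) (d - d') < W then
        (∏ i : Fin q, ind A (b i + d)) * ∏ i : Fin q, ind A (b i + d') else 0) ≤ W ^ q * D.card := by
      intro d _
      rw [sum_comm]
      have : ∀ d' ∈ D, ∑ b : Fin q → G, (if corr (ind A) (d - d') < W then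
          (∏ i : Fin q, ind A (b i + d)) * ∏ i : Fin q, ind A (b i + d') else 0) ≤ W ^ q := by
        intro d' _
        split_ifs with h
        · have e2 : ∑ b : Fin q → G, (∏ i : Fin q, ind A (b i + d)) * ∏ i : Fin q, ind A (b i + d')
              = corr (ind A) (d - d') ^ q := by
            rw [corr_shift, Fintype.sum_pow]
            exact sum_congr rfl fun b _ => prod_mul_distrib.symm
          rw [e2]
          exact pow_le_pow_left₀ (corr_ind_nonneg _ _) h.le _
        · simp; positivity
      refine (sum_le_sum this).trans ?_
      rw [sum_const, nsmul_eq_mul, mul_comm]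
    refine (sum_le_sum this).trans ?_
    rw [sum_const, nsmul_eq_mul]
    apply le_of_eq; ring
  have hDc : (0 : ℝ) < D.card := by exact_mod_cast hD.card_pos
  have hpt : ∀ b, ((Db b).card : ℝ) ^ 2 ≤ τ * D.card * (Db b).card + bad b / η := by
    intro b
    have hbη : 0 ≤ bad b / η := div_nonneg (hbad0 b) hη.le
    have hc0 : (0 : ℝ) ≤ (Db b).card := by positivity
    rcases (Db b).eq_empty_or_nonempty with h0 | hne
    · rw [h0]; simpa using hbη
    · rcases lt_or_ge ((Db b).card : ℝ) (τ * D.card) with hl | hl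
      · nlinarith
      · have := hcon (Db b) (filter_subset _ _) hne hl
        have h3 : ((Db b).card : ℝ) ^ 2 ≤ bad b / η := by
          rw [le_div_iff₀ hη]; simp only [bad]; linarith
        have : 0 ≤ τ * D.card * (Db b).card := by positivity
        linarith
  have htot := sum_le_sum fun b (_ : b ∈ (univ : Finset (Fin q → G))) => hpt b
  rw [hS2, sum_add_distrib, ← mul_sum, hS1, ← sum_div] at htot
  have hVq : 0 < V ^ q := by positivity
  have hb1 : (∑ b, bad b) / η ≤ V ^ q / 2 * (D.card : ℝ) ^ 2 := by
    rw [div_le_iff₀ hη]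
    have := mul_le_mul_of_nonneg_right h2 (sq_nonneg (D.card : ℝ))
    linarith
  have hb2 : τ * D.card * (D.card * (A.card : ℝ) ^ q) ≤ V ^ q / 4 * (D.card : ℝ) ^ 2 := by
    have := mul_le_mul_of_nonneg_right h1 (sq_nonneg (D.card : ℝ))
    linarith
  have hpos : 0 < V ^ q * (D.card : ℝ) ^ 2 := by positivity
  linarith

/-- Localise one copy of a set to a translate of a smaller set. -/
lemma localise (A' D B Dp : Finset G) (hA' : A'.Nonempty) (hsub : A' ⊆ D) (hB : B.Nonempty)
    (hDp : ∀ a ∈ D, ∀ b ∈ B, a - b ∈ Dp) (hDpc : (Dp.card : ℝ) ≤ 2 * D.card)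
    (τ η : ℝ) (hτ0 : 0 < τ) (hη : 0 < η) (hτ : τ * D.card ≤ A'.card) (v : G → ℝ)
    (hv0 : ∀ x, 0 ≤ v x)
    (hv : ∑ d ∈ A', ∑ d' ∈ A', v (d - d') ≤ η * (A'.card : ℝ) ^ 2) :
    ∃ y, ∃ A₂ ⊆ A', (∀ a ∈ A₂, a - y ∈ B) ∧ τ / 8 * B.card ≤ A₂.card ∧
      ∑ d ∈ A', ∑ d' ∈ A₂, v (d - d') ≤ 2 * η * (A'.card * A₂.card) := by
  classical
  by_contra! hcon
  let F : G → Finset G := fun y => A'.filter fun a => a - y ∈ B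
  let w : G → ℝ := fun a' => ∑ d ∈ A', v (d - a')
  have hw0 : ∀ a, 0 ≤ w a := fun a => sum_nonneg fun _ _ => hv0 _
  have hcnt : ∀ a ∈ A', ∑ y ∈ Dp, (if a - y ∈ B then (1 : ℝ) else 0) = B.card := by
    intro a ha
    rw [← sum_filter, sum_const, nsmul_eq_mul, mul_one]
    congr 1
    refine card_bij' (fun y _ => a - y) (fun b _ => a - b) ?_ ?_ ?_ ?_
    · intro y hy; exact (mem_filter.1 hy).2
    · intro b hb; rw [mem_filter]; exact ⟨hDp a (hsub ha) b hb, by simpa using hb⟩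
    · intro y _; simp
    · intro b _; simp
  have hS : ∀ u : G → ℝ, ∑ y ∈ Dp, ∑ a ∈ F y, u a = B.card * ∑ a ∈ A', u a := by
    intro u
    simp only [F, sum_filter]
    rw [sum_comm, mul_sum]
    refine sum_congr rfl fun a ha => ?_
    rw [← hcnt a ha, sum_mul]
    exact sum_congr rfl fun y _ => by split_ifs <;> simp
  have hA'c : (0 : ℝ) < A'.card := by exact_mod_cast hA'.card_pos
  have hBc : (0 : ℝ) < B.card := by exact_mod_cast hB.card_pos
  have hpt : ∀ y ∈ Dp, ∑ a ∈ F y, (1 : ℝ) ≤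
      τ / 8 * B.card + (∑ a ∈ F y, w a) / (2 * η * A'.card) := by
    intro y _
    have hq : 0 ≤ (∑ a ∈ F y, w a) / (2 * η * A'.card) :=
      div_nonneg (sum_nonneg fun a _ => hw0 a) (by positivity)
    rw [sum_const, nsmul_eq_mul, mul_one]
    rcases lt_or_ge ((F y).card : ℝ) (τ / 8 * B.card) with hl | hl
    · linarith
    · have := hcon y (F y) (filter_subset _ _) (fun a ha => (mem_filter.1 ha).2) hl
      rw [sum_comm] at this
      have h3 : ((F y).card : ℝ) ≤ (∑ a ∈ F y, w a) / (2 * η * A'.card) := by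
        rw [le_div_iff₀ (by positivity)]; simp only [w]; linarith
      have : 0 ≤ τ / 8 * B.card := by positivity
      linarith
  have htot := sum_le_sum hpt
  rw [hS, sum_add_distrib, ← sum_div, hS, sum_const, sum_const, nsmul_eq_mul, nsmul_eq_mul,
    mul_one] at htot
  have hww : ∑ a ∈ A', w a ≤ η * (A'.card : ℝ) ^ 2 := by
    simp only [w]; rw [sum_comm]; exact hv
  have h1 : B.card * (∑ a ∈ A', w a) / (2 * η * A'.card) ≤ B.card * A'.card / 2 := by
    rw [div_le_iff₀ (by positivity)]
    have := mul_le_mul_of_nonneg_left hww hBc.le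
    nlinarith
  have h2 : (Dp.card : ℝ) * (τ / 8 * B.card) ≤ A'.card * B.card / 4 := by
    have i1 := mul_le_mul_of_nonneg_right hDpc (by positivity : 0 ≤ τ / 8 * (B.card : ℝ))
    have i2 := mul_le_mul_of_nonneg_right hτ (by positivity : 0 ≤ (B.card : ℝ) / 4)
    linarith
  have : 0 < (B.card : ℝ) * A'.card := by positivity
  linarith

end Sift
end KM

set_option linter.unusedSectionVars false
namespace KM
open Finset
open scoped Pointwise

section CS
variable {G : Type*} [AddCommGroup G] [Fintype G] [DecidableEq G]

lemma tail_one (A : Finset G) (u : G → ℝ) (hu : ∀ a ∈ A, |u a| ≤ 1)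
    (hs : ∑ a ∈ A, u a = 0) (k : ℕ) (ε : ℝ) (hε : 0 < ε) (hε1 : ε ≤ 1) :
    (((Fintype.piFinset fun _ : Fin k => A).filter fun c => ε * k < ∑ i, u (c i)).card : ℝ)
      ≤ Real.exp (-(k * ε ^ 2 / 4)) * (A.card : ℝ) ^ k := by
  set P := Fintype.piFinset fun _ : Fin k => A with hP
  have h1 : ∑ a ∈ A, Real.exp (ε / 2 * u a) ≤ A.card * Real.exp (ε ^ 2 / 4) := by
    have : ∀ a ∈ A, Real.exp (ε / 2 * u a) ≤ 1 + ε / 2 * u a + ε ^ 2 / 4 := by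
      intro a ha
      have hb := hu a ha
      have hb2 : |ε / 2 * u a| ≤ 1 := by
        rw [abs_mul, abs_of_pos (by positivity)]
        nlinarith [abs_nonneg (u a)]
      have := (abs_le.1 (Real.abs_exp_sub_one_sub_id_le hb2)).2
      have h3 : (ε / 2 * u a) ^ 2 ≤ ε ^ 2 / 4 := by
        have : (u a) ^ 2 ≤ 1 := by rw [← sq_abs]; nlinarith [abs_nonneg (u a)]
        have e2 := sq_nonneg ε
        nlinarith
      linarith
    refine (sum_le_sum this).trans ?_
    rw [sum_add_distrib, sum_add_distrib, ← mul_sum, hs, sum_const, sum_const, nsmul_eq_mul,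
      nsmul_eq_mul]
    have := Real.add_one_le_exp (ε ^ 2 / 4)
    have hc : (0 : ℝ) ≤ A.card := by positivity
    nlinarith
  have h2 : ∑ c ∈ P, Real.exp (ε / 2 * ∑ i, u (c i)) ≤ (A.card * Real.exp (ε ^ 2 / 4)) ^ k := by
    have e : ∑ c ∈ P, Real.exp (ε / 2 * ∑ i, u (c i)) = (∑ a ∈ A, Real.exp (ε / 2 * u a)) ^ k := by
      have := prod_univ_sum (fun _ : Fin k => A) (fun _ a => Real.exp (ε / 2 * u a))
      rw [prod_const, card_univ, Fintype.card_fin] at this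
      rw [this]
      refine sum_congr rfl fun c _ => ?_
      rw [mul_sum, Real.exp_sum]
    rw [e]
    exact pow_le_pow_left₀ (sum_nonneg fun _ _ => (Real.exp_pos _).le) h1 k
  set F := P.filter fun c => ε * k < ∑ i, u (c i) with hF
  have h3 : (F.card : ℝ) * Real.exp (k * ε ^ 2 / 2) ≤ ∑ c ∈ P, Real.exp (ε / 2 * ∑ i, u (c i)) := by
    calc (F.card : ℝ) * Real.exp (k * ε ^ 2 / 2) = ∑ c ∈ F, Real.exp (k * ε ^ 2 / 2) := by
          rw [sum_const, nsmul_eq_mul]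
      _ ≤ ∑ c ∈ F, Real.exp (ε / 2 * ∑ i, u (c i)) := by
          refine sum_le_sum fun c hc => ?_
          apply Real.exp_le_exp.2
          have := (mem_filter.1 hc).2
          nlinarith
      _ ≤ _ := sum_le_sum_of_subset_of_nonneg (filter_subset _ _) fun _ _ _ => (Real.exp_pos _).le
  have h4 := h3.trans h2
  rw [mul_pow, ← Real.exp_nat_mul] at h4
  have h5 : Real.exp (-(k * ε ^ 2 / 4)) * (A.card : ℝ) ^ k =
      ((A.card : ℝ) ^ k * Real.exp (k * (ε ^ 2 / 4))) * Real.exp (-(k * ε ^ 2 / 2)) := by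
    rw [mul_assoc, ← Real.exp_add, mul_comm]; congr 2; ring
  rw [h5]
  have h6 := mul_le_mul_of_nonneg_right h4 (Real.exp_pos (-(k * ε ^ 2 / 2))).le
  rw [mul_assoc, ← Real.exp_add, add_neg_cancel, Real.exp_zero, mul_one] at h6
  exact h6

lemma tail_two (A : Finset G) (hA : A.Nonempty) (v : G → ℝ) (hv0 : ∀ a, 0 ≤ v a)
    (hv1 : ∀ a, v a ≤ 1) (k : ℕ) (hk : 0 < k) (ε : ℝ) (hε : 0 < ε) (hε1 : ε ≤ 1) :
    (((Fintype.piFinset fun _ : Fin k => A).filter fun c =>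
        ε < |(∑ i, v (c i)) / k - (∑ a ∈ A, v a) / A.card|).card : ℝ)
      ≤ 2 * Real.exp (-(k * ε ^ 2 / 4)) * (A.card : ℝ) ^ k := by
  classical
  set φ := (∑ a ∈ A, v a) / A.card with hφ
  have hAc : (0 : ℝ) < A.card := by exact_mod_cast hA.card_pos
  have hkR : (0 : ℝ) < k := by exact_mod_cast hk
  have hφ0 : 0 ≤ φ := div_nonneg (sum_nonneg fun a _ => hv0 a) hAc.le
  have hφ1 : φ ≤ 1 := by
    rw [hφ, div_le_one hAc]
    calc _ ≤ ∑ a ∈ A, (1 : ℝ) := sum_le_sum fun a _ => hv1 a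
      _ = _ := by simp
  have hsum : ∑ a ∈ A, (v a - φ) = 0 := by
    rw [sum_sub_distrib, sum_const, nsmul_eq_mul, hφ]; field_simp; simp
  have hb : ∀ a ∈ A, |v a - φ| ≤ 1 := fun a _ => by
    rw [abs_le]; constructor <;> linarith [hv0 a, hv1 a]
  have t1 := tail_one A (fun a => v a - φ) hb hsum k ε hε hε1
  have t2 := tail_one A (fun a => -(v a - φ)) (fun a ha => by rw [abs_neg]; exact hb a ha)
    (by rw [sum_neg_distrib, hsum, neg_zero]) k ε hε hε1
  have hsub : ((Fintype.piFinset fun _ : Fin k => A).filter fun c =>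
        ε < |(∑ i, v (c i)) / k - φ|) ⊆
      ((Fintype.piFinset fun _ : Fin k => A).filter fun c => ε * k < ∑ i, (v (c i) - φ)) ∪
      ((Fintype.piFinset fun _ : Fin k => A).filter fun c => ε * k < ∑ i, -(v (c i) - φ)) := by
    intro c hc
    rw [mem_filter] at hc
    rw [mem_union, mem_filter, mem_filter]
    have e : ∑ i, (v (c i) - φ) = ((∑ i, v (c i)) / k - φ) * k := by
      rw [sum_sub_distrib, sum_const, card_univ, Fintype.card_fin, nsmul_eq_mul]; field_simp
    rcases lt_abs.1 hc.2 with h | h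
    · left; refine ⟨hc.1, ?_⟩; rw [e]; exact mul_lt_mul_of_pos_right h hkR
    · right; refine ⟨hc.1, ?_⟩; rw [sum_neg_distrib, e, ← neg_mul]
      exact mul_lt_mul_of_pos_right h hkR
  have hc := (card_le_card hsub).trans (card_union_le _ _)
  have hc' := (Nat.cast_le (α := ℝ)).2 hc
  rw [Nat.cast_add] at hc'
  linarith

/-- Croot and Sisask almost periodicity in `L^∞`. -/
lemma croot_sisask (A' A₂ S X B Y : Finset G) (hA' : A'.Nonempty) (hA₂ : A₂.Nonempty)
    (hX : ∀ x ∈ S, ∀ a ∈ A₂, x + a ∈ X) (hY : ∀ a ∈ A₂, ∀ t ∈ B, a + t ∈ Y)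
    (k : ℕ) (hk : 0 < k) (ε : ℝ) (hε : 0 < ε) (hε1 : ε ≤ 1) (hB : B.Nonempty)
    (ν : ℝ) (hν : 0 < ν) (hνY : ν * Y.card ≤ A₂.card) :
    ∃ T ⊆ B, T.Nonempty ∧ 1 / 2 * ν ^ k * B.card ≤ T.card ∧
      ∀ x, ∀ t ∈ T, ∀ s ∈ T,
        |avg A' (avg (-A₂) (ind S)) (x + (t - s)) - avg A' (avg (-A₂) (ind S)) x|
          ≤ 2 * ε + 8 * Real.exp (-(k * ε ^ 2 / 4)) * X.card / A'.card := by
  classical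
  set P := Fintype.piFinset fun _ : Fin k => A₂ with hP
  set φ := avg (-A₂) (ind S) with hφ
  have hφx : ∀ x, φ x = (∑ a ∈ A₂, ind S (x - a)) / A₂.card := by
    intro x; simp only [hφ, avg, card_neg]
    rw [sum_neg_index]; simp only [sub_eq_add_neg]
  have hA₂c : (0 : ℝ) < A₂.card := by exact_mod_cast hA₂.card_pos
  have hA'c : (0 : ℝ) < A'.card := by exact_mod_cast hA'.card_pos
  have hBc : (0 : ℝ) < B.card := by exact_mod_cast hB.card_pos
  set θ := Real.exp (-(k * ε ^ 2 / 4)) with hθ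
  have hθ0 : 0 < θ := Real.exp_pos _
  let Pc : (Fin k → G) → G → ℝ := fun c x => (∑ i, ind S (x - c i)) / k
  let bad : (Fin k → G) → Finset G := fun c => univ.filter fun x => ε < |Pc c x - φ x|
  have hbadX : ∀ c ∈ P, bad c ⊆ X := by
    intro c hc x hx
    by_contra hxX
    have hz : ∀ a ∈ A₂, ind S (x - a) = 0 := by
      intro a ha
      unfold ind
      rw [if_neg]
      intro h
      exact hxX (by simpa using hX _ h a ha)
    have h1 : φ x = 0 := by rw [hφx, sum_eq_zero hz, zero_div]
    have h2 : Pc c x = 0 := by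
      simp only [Pc]
      rw [sum_eq_zero fun i _ => hz _ (Fintype.mem_piFinset.1 hc i), zero_div]
    have := (mem_filter.1 hx).2
    rw [h1, h2] at this
    simp at this
    linarith
  have hbadsum : ∑ c ∈ P, ((bad c).card : ℝ) ≤ X.card * (2 * θ * (A₂.card : ℝ) ^ k) := by
    have e : ∀ c ∈ P, ((bad c).card : ℝ) = ∑ x ∈ X, if ε < |Pc c x - φ x| then (1 : ℝ) else 0 := by
      intro c hc
      have : bad c = X.filter fun x => ε < |Pc c x - φ x| := by
        ext x
        simp only [mem_filter]
        constructor
        · intro h; exact ⟨hbadX c hc h, (mem_filter.1 h).2⟩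
        · intro h; exact mem_filter.2 ⟨mem_univ _, h.2⟩
      rw [this, card_filter]; push_cast; rfl
    rw [sum_congr rfl e, sum_comm]
    calc _ ≤ ∑ x ∈ X, (2 * θ * (A₂.card : ℝ) ^ k) := by
          refine sum_le_sum fun x _ => ?_
          have := tail_two A₂ hA₂ (fun a => ind S (x - a)) (fun a => ind_nonneg _ _)
            (fun a => ind_le_one _ _) k hk ε hε hε1
          refine le_trans (le_of_eq ?_) this
          rw [card_filter]; push_cast
          refine sum_congr rfl fun c _ => ?_
          simp only [Pc, hφx]
      _ = _ := by rw [sum_const, nsmul_eq_mul]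
  let Good := P.filter fun c => ((bad c).card : ℝ) ≤ 4 * θ * X.card
  have hGood : (A₂.card : ℝ) ^ k / 2 ≤ Good.card := by
    have hPc : (P.card : ℝ) = (A₂.card : ℝ) ^ k := by
      rw [hP, Fintype.card_piFinset]; simp
    by_contra! hlt
    let Bd := P.filter fun c => ¬ ((bad c).card : ℝ) ≤ 4 * θ * X.card
    have hsplit : (Good.card : ℝ) + Bd.card = P.card := by
      exact_mod_cast card_filter_add_card_filter_not (s := P) _
    have hBd : (A₂.card : ℝ) ^ k / 2 < Bd.card := by rw [hPc] at hsplit; linarith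
    have hBdpos : 0 < Bd.card := by
      have : (0 : ℝ) < Bd.card := lt_of_le_of_lt (by positivity) hBd
      exact_mod_cast this
    have h1 : (Bd.card : ℝ) * (4 * θ * X.card) < ∑ c ∈ P, ((bad c).card : ℝ) := by
      calc (Bd.card : ℝ) * (4 * θ * X.card) = ∑ c ∈ Bd, (4 * θ * X.card) := by
            rw [sum_const, nsmul_eq_mul]
        _ < ∑ c ∈ Bd, ((bad c).card : ℝ) :=
            sum_lt_sum_of_nonempty (card_pos.1 hBdpos) fun c hc => not_le.1 (mem_filter.1 hc).2
        _ ≤ _ := sum_le_sum_of_subset_of_nonneg (filter_subset _ _) fun _ _ _ => by positivity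
    have hXc : (0 : ℝ) ≤ 4 * θ * X.card := by positivity
    have h2 := mul_le_mul_of_nonneg_right hBd.le hXc
    linarith
  -- pigeonhole
  let Q := Fintype.piFinset fun _ : Fin k => Y
  have hQc : (Q.card : ℝ) = (Y.card : ℝ) ^ k := by
    simp only [Q]; rw [Fintype.card_piFinset]; simp
  let Tu : (Fin k → G) → Finset G := fun u => B.filter fun t => (fun i => u i - t) ∈ Good
  have hdc : ∑ u ∈ Q, ((Tu u).card : ℝ) = Good.card * B.card := by
    have e : ∀ u, ((Tu u).card : ℝ) = ∑ t ∈ B, if (fun i => u i - t) ∈ Good then (1 : ℝ) else 0 := by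
      intro u; simp only [Tu]; rw [card_filter]; push_cast; rfl
    simp only [e]
    rw [sum_comm]
    have : ∀ t ∈ B, ∑ u ∈ Q, (if (fun i => u i - t) ∈ Good then (1 : ℝ) else 0) = Good.card := by
      intro t ht
      rw [← sum_filter, sum_const, nsmul_eq_mul, mul_one]
      congr 1
      refine card_bij' (fun u _ => fun i => u i - t) (fun c _ => fun i => c i + t) ?_ ?_ ?_ ?_
      · intro u hu; exact (mem_filter.1 hu).2
      · intro c hc
        rw [mem_filter]
        constructor
        · simp only [Q, Fintype.mem_piFinset]
          intro i
          exact hY _ (Fintype.mem_piFinset.1 (mem_filter.1 hc).1 i) t ht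
        · simpa using hc
      · intro u _; simp
      · intro c _; simp
    rw [sum_congr rfl this, sum_const, nsmul_eq_mul, mul_comm]
  have hex : ∃ u ∈ Q, 1 / 2 * ν ^ k * B.card ≤ (Tu u).card := by
    by_contra! hlt
    have hQne : Q.Nonempty := by
      rw [Fintype.piFinset_nonempty]
      intro i
      obtain ⟨a, ha⟩ := hA₂
      obtain ⟨t, ht⟩ := hB
      exact ⟨_, hY a ha t ht⟩
    have h1 := sum_lt_sum_of_nonempty hQne hlt
    rw [hdc, sum_const, nsmul_eq_mul, hQc] at h1
    have h2 : ν ^ k * (Y.card : ℝ) ^ k ≤ (A₂.card : ℝ) ^ k := by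
      rw [← mul_pow]; exact pow_le_pow_left₀ (by positivity) hνY k
    have h3 := mul_le_mul_of_nonneg_right hGood hBc.le
    have h4 := mul_le_mul_of_nonneg_right h2 hBc.le
    linarith
  obtain ⟨u, _, hu⟩ := hex
  refine ⟨Tu u, filter_subset _ _, ?_, hu, ?_⟩
  · rw [← card_pos]
    have : (0 : ℝ) < (Tu u).card := lt_of_lt_of_le (by positivity) hu
    exact_mod_cast this
  intro x t ht s hs
  have hgt := (mem_filter.1 (mem_filter.1 ht).2).2
  have hgs := (mem_filter.1 (mem_filter.1 hs).2).2
  -- bad points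
  let Bs : Finset G := univ.filter fun z => 2 * ε < |φ (z + (t - s)) - φ z|
  have hBs : (Bs.card : ℝ) ≤ 8 * θ * X.card := by
    have hsub : Bs ⊆ ((bad fun i => u i - s).image fun z => z - (t - s)) ∪ (bad fun i => u i - t) := by
      intro z hz
      by_contra hcon
      rw [mem_union, not_or] at hcon
      have h1 : ¬ ε < |Pc (fun i => u i - s) (z + (t - s)) - φ (z + (t - s))| := by
        intro h
        apply hcon.1
        rw [mem_image]
        exact ⟨z + (t - s), mem_filter.2 ⟨mem_univ _, h⟩, by simp⟩
      have h2 : ¬ ε < |Pc (fun i => u i - t) z - φ z| := fun h =>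
        hcon.2 (mem_filter.2 ⟨mem_univ _, h⟩)
      have h3 : Pc (fun i => u i - s) (z + (t - s)) = Pc (fun i => u i - t) z := by
        simp only [Pc]
        congr 1
        refine sum_congr rfl fun i _ => ?_
        congr 1; abel
      rw [h3] at h1
      have h4 := (mem_filter.1 hz).2
      have h5 := abs_sub_le (φ (z + (t - s))) (Pc (fun i => u i - t) z) (φ z)
      rw [abs_sub_comm (φ (z + (t - s))) (Pc (fun i => u i - t) z)] at h5
      linarith [not_lt.1 h1, not_lt.1 h2]
    have h1 := (card_le_card hsub).trans (card_union_le _ _)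
    have h2 : (Bs.card : ℝ) ≤ ((bad fun i => u i - s).card : ℝ) + ((bad fun i => u i - t).card : ℝ) := by
      exact_mod_cast h1.trans (Nat.add_le_add_right card_image_le _)
    linarith
  have hφ0 : ∀ z, 0 ≤ φ z := fun z => avg_nonneg _ (fun _ => ind_nonneg _ _) z
  have hφ1 : ∀ z, φ z ≤ 1 := fun z => avg_le _ hA₂.neg (fun _ => ind_le_one _ _) z
  have hpt : ∀ z, |φ (z + (t - s)) - φ z| ≤ 2 * ε + ind Bs z := by
    intro z
    by_cases hz : z ∈ Bs
    · have : ind Bs z = 1 := by simp [ind, hz]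
      rw [this, abs_le]
      constructor <;> linarith [hφ0 z, hφ1 z, hφ0 (z + (t - s)), hφ1 (z + (t - s))]
    · have h0 : ind Bs z = 0 := by simp [ind, hz]
      rw [h0, add_zero]
      by_contra! h
      exact hz (mem_filter.2 ⟨mem_univ _, h⟩)
  unfold avg
  rw [← sub_div, ← sum_sub_distrib, abs_div, abs_of_pos hA'c, div_le_iff₀ hA'c]
  calc _ ≤ ∑ a ∈ A', |φ (x + (t - s) + a) - φ (x + a)| := abs_sum_le_sum_abs _ _
    _ ≤ ∑ a ∈ A', (2 * ε + ind Bs (x + a)) := by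
        refine sum_le_sum fun a _ => ?_
        have := hpt (x + a)
        rwa [show x + a + (t - s) = x + (t - s) + a by abel] at this
    _ = 2 * ε * A'.card + ∑ a ∈ A', ind Bs (x + a) := by
        rw [sum_add_distrib, sum_const, nsmul_eq_mul]; ring
    _ ≤ 2 * ε * A'.card + Bs.card := by
        have : ∑ a ∈ A', ind Bs (x + a) ≤ ∑ a, ind Bs (x + a) :=
          sum_le_sum_of_subset_of_nonneg (subset_univ _) fun _ _ _ => ind_nonneg _ _
        have e : ∑ a, ind Bs (x + a) = Bs.card := by
          refine (Equiv.sum_comp (Equiv.addLeft x) (fun a => ind Bs a)).trans ?_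
          simp [ind]
        linarith
    _ ≤ (2 * ε + 8 * θ * X.card / A'.card) * A'.card := by
        rw [add_mul, div_mul_cancel₀ _ hA'c.ne']; linarith

end CS
end KM

set_option linter.unusedSectionVars false
namespace KM
open Finset
open scoped Pointwise

section Half
variable {G : Type*} [AddCommGroup G] [Fintype G] [DecidableEq G]

lemma half_smul (hodd : Odd (Fintype.card G)) (w : G) :
    ((Fintype.card G + 1) / 2) • (w + w) = w := by
  obtain ⟨r, hr⟩ := hodd
  have e : (Fintype.card G + 1) / 2 * 2 = Fintype.card G + 1 := by omega
  rw [← two_nsmul, ← mul_nsmul', e, add_nsmul, card_nsmul_eq_zero, one_nsmul, zero_add]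

lemma double_inj (hodd : Odd (Fintype.card G)) {x y : G} (h : x + x = y + y) : x = y := by
  rw [← half_smul hodd x, h, half_smul hodd y]

open Classical in
/-- The set of halved characters. -/
noncomputable def halfs (Γ : Finset (AddChar G ℂ)) : Finset (AddChar G ℂ) :=
  Γ.image fun ψ => ψ ^ ((Fintype.card G + 1) / 2)

lemma halfs_card (Γ : Finset (AddChar G ℂ)) : (halfs Γ).card ≤ Γ.card := card_image_le

lemma double_mem_iff (hodd : Odd (Fintype.card G)) (Γ : Finset (AddChar G ℂ)) (ρ : ℝ) (x : G) :
    x + x ∈ bohr (halfs Γ) ρ ↔ x ∈ bohr Γ ρ := by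
  have e : ∀ ψ : AddChar G ℂ, (ψ ^ ((Fintype.card G + 1) / 2)) (x + x) = ψ x := by
    intro ψ
    rw [AddChar.pow_apply, ← AddChar.map_nsmul_eq_pow, half_smul hodd]
  rw [mem_bohr, mem_bohr]
  simp only [halfs, mem_image, forall_exists_index, and_imp, forall_apply_eq_imp_iff₂, e]

lemma bohr_halfs_sub (hodd : Odd (Fintype.card G)) (Γ : Finset (AddChar G ℂ)) {ρ σ : ℝ}
    (h : 2 * ρ ≤ σ) : bohr (halfs Γ) ρ ⊆ bohr Γ σ := fun z hz =>
  (double_mem_iff hodd Γ σ z).1 (add_mem_bohr hz hz (by linarith))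

lemma bohr_halfs_card (hodd : Odd (Fintype.card G)) (Γ : Finset (AddChar G ℂ)) (ρ : ℝ) :
    (bohr (halfs Γ) ρ).card ≤ (bohr Γ ρ).card := by
  have key : ∀ z : G, ((Fintype.card G + 1) / 2) • z + ((Fintype.card G + 1) / 2) • z = z := by
    intro z; rw [← nsmul_add, half_smul hodd]
  refine card_le_card_of_injOn (fun z => ((Fintype.card G + 1) / 2) • z) ?_ ?_
  · intro z hz
    rw [mem_coe] at *
    rw [← double_mem_iff hodd]
    simp only [key]; exact hz
  · intro z _ w _ h
    simp only at h
    rw [← key z, h, key w]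

lemma reg_sdiff {κ : ℝ} {m : ℕ} {Γ : Finset (AddChar G ℂ)} {ρ : ℝ} (hκ : 0 ≤ κ)
    (hρ : 0 < ρ) (hreg : Reg κ m Γ ρ) :
    (((bohr Γ ρ) \ (bohr Γ (ρ - κ * ρ))).card : ℝ) ≤ (bohr Γ ρ).card / m := by
  have hκρ : 0 ≤ κ * ρ := by positivity
  have hsub : bohr Γ (ρ - κ * ρ) ⊆ bohr Γ ρ := bohr_mono Γ (by linarith)
  have h1 : ((bohr Γ ρ).card : ℝ) ≤ (bohr Γ (ρ + κ * ρ)).card := by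
    exact_mod_cast card_le_card (bohr_mono Γ (by linarith))
  have h2 : ((bohr Γ (ρ - κ * ρ)).card : ℝ) ≤ (bohr Γ ρ).card := by
    exact_mod_cast card_le_card hsub
  unfold Reg at hreg
  have h3 : (1 / m : ℝ) * (bohr Γ (ρ - κ * ρ)).card ≤ 1 / m * (bohr Γ ρ).card :=
    mul_le_mul_of_nonneg_left h2 (by positivity)
  have h4 : (1 / m : ℝ) * (bohr Γ ρ).card = (bohr Γ ρ).card / m := by ring
  rw [cast_card_sdiff hsub]
  nlinarith

lemma reg_two {κ : ℝ} {m : ℕ} {Γ : Finset (AddChar G ℂ)} {ρ : ℝ} (hκ : 0 ≤ κ) (hm : 1 ≤ m)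
    (hρ : 0 < ρ) (hreg : Reg κ m Γ ρ) :
    ((bohr Γ (ρ + κ * ρ)).card : ℝ) ≤ 2 * (bohr Γ ρ).card := by
  have hκρ : 0 ≤ κ * ρ := by positivity
  have h2 : ((bohr Γ (ρ - κ * ρ)).card : ℝ) ≤ (bohr Γ ρ).card := by
    exact_mod_cast card_le_card (bohr_mono Γ (by linarith))
  have h1 : (1 / m : ℝ) ≤ 1 := by
    rw [div_le_one (by exact_mod_cast hm)]; exact_mod_cast hm
  have h0 : (0 : ℝ) ≤ (bohr Γ (ρ - κ * ρ)).card := by positivity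
  unfold Reg at hreg
  nlinarith

/-- Counting shifted elements in a regular Bohr set. -/
lemma reg_count {κ : ℝ} {m : ℕ} {Γ : Finset (AddChar G ℂ)} {ρ : ℝ} (hκ : 0 ≤ κ)
    (hρ : 0 < ρ) (hreg : Reg κ m Γ ρ) (A : Finset G) (hA : A ⊆ bohr Γ ρ) (x : G)
    (hx : x ∈ bohr Γ (κ * ρ)) :
    (A.card : ℝ) - (bohr Γ ρ).card / m ≤ ∑ y, ind A y * ind (bohr Γ ρ) (x + y) ∧
      ∑ y, ind A y * ind (bohr Γ ρ) (x + y) ≤ A.card := by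
  have e : ∀ y, ind A y * ind (bohr Γ ρ) (x + y) =
      if y ∈ A.filter (fun y => x + y ∈ bohr Γ ρ) then (1 : ℝ) else 0 := by
    intro y; simp only [ind, mem_filter]; split_ifs <;> simp_all
  have e2 : ∑ y, ind A y * ind (bohr Γ ρ) (x + y) =
      ((A.filter (fun y => x + y ∈ bohr Γ ρ)).card : ℝ) := by
    simp only [e, sum_ite_mem, univ_inter, sum_const, nsmul_eq_mul, mul_one]
  rw [e2]
  constructor
  · have := reg_sdiff hκ hρ hreg
    have hsub : A ⊆ A.filter (fun y => x + y ∈ bohr Γ ρ) ∪ (bohr Γ ρ \ bohr Γ (ρ - κ * ρ)) := by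
      intro y hy
      rw [mem_union]
      by_cases h : y ∈ bohr Γ (ρ - κ * ρ)
      · left; rw [mem_filter]; exact ⟨hy, add_mem_bohr hx h (by linarith)⟩
      · right; rw [mem_sdiff]; exact ⟨hA hy, h⟩
    have h2 := (Nat.cast_le (α := ℝ)).2 ((card_le_card hsub).trans (card_union_le _ _))
    rw [Nat.cast_add] at h2
    linarith
  · exact_mod_cast card_le_card (filter_subset _ _)

lemma aux_div (a b c α : ℝ) (hα : α ≠ 0) (hb : b ≠ 0) :
    a / (α * (α * b)) - (1 + c / b) = (a / α ^ 2 - (b + c)) / b := by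
  field_simp

set_option maxHeartbeats 1000000 in
lemma stage2 (hodd : Odd (Fintype.card G)) {κ : ℝ} {m : ℕ} {Γ : Finset (AddChar G ℂ)}
    {ρ₁ ρ₂ ρ₃ : ℝ} (hκ : 0 < κ) (hρ₁ : 0 < ρ₁) (hρ₂ : 0 < ρ₂) (hρ₃ : 0 < ρ₃)
    (hreg : Reg κ m Γ ρ₁) (hm : 0 < m)
    (hreg2 : ((bohr Γ (ρ₂ + κ * ρ₂)).card : ℝ) ≤ 2 * (bohr Γ ρ₂).card)
    (h21 : 2 * ρ₂ ≤ κ * ρ₁) (h32 : 2 * ρ₃ ≤ κ * ρ₂) (h31 : 4 * ρ₃ ≤ κ * ρ₁)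
    (A C : Finset G) (hA : A ⊆ bohr Γ ρ₁) (hC : C ⊆ bohr Γ ρ₂)
    (hAP : ∀ y ∈ A, ∀ y' ∈ A, ∀ z ∈ C, y + y' = z + z → y = y')
    (α : ℝ) (hα : 0 < α) (hαA : (A.card : ℝ) = α * (bohr Γ ρ₁).card)
    (hmα : 120 ≤ m * α) (hsize : 120 ≤ α ^ 2 * (bohr Γ ρ₁).card)
    (γ : ℝ) (hγC : γ * (bohr Γ ρ₂).card ≤ C.card)
    (p : ℕ) (hp : Even p) (hp6 : 6 ≤ p) (hpγ : (4 / 5 : ℝ) ^ p ≤ (9 / 10) ^ p * (γ / 2)) :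
    (5 / 4 * (α * A.card)) ^ (3 * p) * ((bohr (halfs Γ) ρ₃).card : ℝ) ^ 2 ≤
      ∑ d ∈ bohr (halfs Γ) ρ₃, ∑ d' ∈ bohr (halfs Γ) ρ₃, corr (ind A) (d - d') ^ (3 * p) := by
  classical
  set B := bohr Γ ρ₁ with hB
  set D := bohr (halfs Γ) ρ₃ with hD
  set f : G → ℝ := fun x => ind A x / α - ind B x with hf
  have hBc : (0 : ℝ) < B.card := by exact_mod_cast bohr_card_pos Γ hρ₁.le
  have hDc : (0 : ℝ) < D.card := by exact_mod_cast bohr_card_pos _ hρ₃.le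
  have hmR : (0 : ℝ) < m := by exact_mod_cast hm
  have hBm : (B.card : ℝ) / m ≤ α * B.card / 120 := by
    rw [div_le_iff₀ hmR]
    have := mul_le_mul_of_nonneg_right hmα hBc.le
    linarith
  have hα1 : α ≤ 1 := by
    have : (A.card : ℝ) ≤ B.card := by exact_mod_cast card_le_card hA
    rw [hαA] at this
    by_contra! h
    nlinarith
  -- cross terms
  have cA : ∀ x ∈ bohr Γ (κ * ρ₁), (119 / 120) * B.card ≤ (∑ y, ind A y * ind B (x + y)) / α ∧
      (∑ y, ind A y * ind B (x + y)) / α ≤ B.card := by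
    intro x hx
    have := reg_count hκ.le hρ₁ hreg A hA x hx
    rw [le_div_iff₀ hα, div_le_iff₀ hα]
    rw [← hB, hαA] at this
    constructor <;> linarith
  have cB : ∀ x ∈ bohr Γ (κ * ρ₁), (119 / 120) * B.card ≤ (∑ y, ind B y * ind B (x + y)) ∧
      (∑ y, ind B y * ind B (x + y)) ≤ B.card := by
    intro x hx
    have := reg_count hκ.le hρ₁ hreg B subset_rfl x hx
    rw [← hB] at this
    constructor <;> nlinarith
  have hsymA : ∀ y, ind B (-y) = ind B y := by
    intro y
    unfold ind
    have : -y ∈ B ↔ y ∈ B := ⟨fun h => by simpa using neg_mem_bohr h, neg_mem_bohr⟩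
    simp [this]
  -- convolution bound
  have hconv : ∀ x ∈ bohr Γ (κ * ρ₁), conv f x ≤ conv (ind A) x / α ^ 2 - (59 / 60) * B.card := by
    intro x hx
    have hnx : -x ∈ bohr Γ (κ * ρ₁) := neg_mem_bohr hx
    have e : conv f x = conv (ind A) x / α ^ 2 - (∑ y, ind A y * ind B (x - y)) / α
        - (∑ y, ind B y * ind A (x - y)) / α + ∑ y, ind B y * ind B (x - y) := by
      simp only [conv, hf]
      rw [sum_div, sum_div, sum_div, ← sum_sub_distrib, ← sum_sub_distrib, ← sum_add_distrib]
      refine sum_congr rfl fun y _ => ?_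
      field_simp
      ring
    have r : ∀ y, ind B (x - y) = ind B (-x + y) := by
      intro y; rw [← hsymA]; congr 1; abel
    have e2 : ∑ y, ind B y * ind A (x - y) = ∑ y, ind A y * ind B (x - y) := by
      rw [← Equiv.sum_comp (Equiv.subLeft x)]
      refine sum_congr rfl fun y _ => ?_
      simp only [Equiv.subLeft_apply]
      rw [mul_comm]; congr 2; abel
    rw [e, e2]
    simp only [r]
    have a := cA (-x) hnx
    have b := cB (-x) hnx
    linarith
  -- correlation
  have hcorr : ∀ x ∈ bohr Γ (κ * ρ₁),
      |corr (ind A) x / α ^ 2 - (B.card + corr f x)| ≤ 1 / 60 * B.card := by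
    intro x hx
    have hnx : -x ∈ bohr Γ (κ * ρ₁) := neg_mem_bohr hx
    have e : corr f x = corr (ind A) x / α ^ 2 - (∑ y, ind A (x + y) * ind B y) / α
        - (∑ y, ind B (x + y) * ind A y) / α + ∑ y, ind B (x + y) * ind B y := by
      simp only [corr, hf]
      rw [sum_div, sum_div, sum_div, ← sum_sub_distrib, ← sum_sub_distrib, ← sum_add_distrib]
      refine sum_congr rfl fun y _ => ?_
      field_simp
      ring
    have e1 : ∑ y, ind A (x + y) * ind B y = ∑ y, ind A y * ind B (-x + y) := by
      rw [← Equiv.sum_comp (Equiv.addLeft x) (fun y => ind A y * ind B (-x + y))]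
      refine sum_congr rfl fun y _ => ?_
      simp
    have e2 : ∑ y, ind B (x + y) * ind A y = ∑ y, ind A y * ind B (x + y) :=
      sum_congr rfl fun y _ => mul_comm _ _
    have e3 : ∑ y, ind B (x + y) * ind B y = ∑ y, ind B y * ind B (x + y) :=
      sum_congr rfl fun y _ => mul_comm _ _
    rw [e, e1, e2, e3]
    have a := cA (-x) hnx
    have a' := cA x hx
    have b := cB x hx
    rw [abs_le]
    constructor <;> linarith
  -- values on the doubled set
  have hval : ∀ z ∈ C, (9 / 10 : ℝ) ^ p ≤ (conv f (z + z) / B.card) ^ p := by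
    intro z hz
    have hzz : z + z ∈ bohr Γ (κ * ρ₁) := add_mem_bohr (hC hz) (hC hz) (by linarith)
    have h1 := hconv _ hzz
    have h2 : conv (ind A) (z + z) ≤ 1 := by
      unfold conv
      have : ∀ y, ind A y * ind A (z + z - y) ≤ if y = z then (1 : ℝ) else 0 := by
        intro y
        unfold ind
        split_ifs with ha hb hc hb hc <;> simp
        have := hAP y ha _ hb z hz (by abel)
        have h3 : y + y = z + z := by
          nth_rewrite 2 [this]; abel
        exact absurd (double_inj hodd h3) hc
      calc _ ≤ ∑ y, if y = z then (1 : ℝ) else 0 := sum_le_sum fun y _ => this y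
        _ = 1 := by simp
    have h3 : conv (ind A) (z + z) / α ^ 2 ≤ B.card / 120 := by
      rw [div_le_iff₀ (by positivity)]
      linarith
    have h4 : 9 / 10 ≤ -(conv f (z + z) / B.card) := by
      rw [← neg_div, le_div_iff₀ hBc]; linarith
    rw [← hp.neg_pow (conv f (z + z) / B.card)]
    exact pow_le_pow_left₀ (by norm_num) h4 p
  -- averaging
  set E := bohr (halfs Γ) (ρ₂ + κ * ρ₂) with hE
  have hEc : (E.card : ℝ) ≤ 2 * (bohr Γ ρ₂).card := by
    refine le_trans ?_ hreg2
    exact_mod_cast bohr_halfs_card hodd Γ _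
  have hEpos : (0 : ℝ) < E.card := by exact_mod_cast bohr_card_pos _ (by positivity)
  have hsum : (D.card : ℝ) ^ 2 * ((9 / 10) ^ p * C.card) ≤
      ∑ s ∈ E, ∑ d ∈ D, ∑ d' ∈ D, (conv f (s + (d - d')) / B.card) ^ p := by
    have h1 : ∀ d ∈ D, ∀ d' ∈ D, (9 / 10) ^ p * (C.card : ℝ) ≤
        ∑ s ∈ E, (conv f (s + (d - d')) / B.card) ^ p := by
      intro d hd d' hd'
      calc (9 / 10) ^ p * (C.card : ℝ) = ∑ z ∈ C, (9 / 10 : ℝ) ^ p := by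
            rw [sum_const, nsmul_eq_mul, mul_comm]
        _ ≤ ∑ z ∈ C, (conv f (z + z) / B.card) ^ p := sum_le_sum hval
        _ = ∑ s ∈ C.image (fun z => z + z - (d - d')), (conv f (s + (d - d')) / B.card) ^ p := by
            rw [sum_image]
            · simp
            · intro z _ w _ h
              simp only [sub_left_inj] at h
              exact double_inj hodd h
        _ ≤ _ := by
            apply sum_le_sum_of_subset_of_nonneg
            · intro s hs
              obtain ⟨z, hz, rfl⟩ := mem_image.1 hs
              have a1 := (double_mem_iff hodd Γ ρ₂ z).2 (hC hz)
              have a2 := sub_mem_bohr hd hd' (le_refl (ρ₃ + ρ₃))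
              exact sub_mem_bohr a1 a2 (by linarith)
            · intro s _ _; exact hp.pow_nonneg _
    calc (D.card : ℝ) ^ 2 * ((9 / 10) ^ p * C.card) = ∑ d ∈ D, ∑ d' ∈ D, (9 / 10) ^ p * (C.card : ℝ) := by
          rw [sum_const, sum_const, nsmul_eq_mul, nsmul_eq_mul]; ring
      _ ≤ ∑ d ∈ D, ∑ d' ∈ D, ∑ s ∈ E, (conv f (s + (d - d')) / B.card) ^ p :=
          sum_le_sum fun d hd => sum_le_sum fun d' hd' => h1 d hd d' hd'
      _ = _ := by
          rw [sum_congr rfl fun d _ => sum_comm, sum_comm]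
  have hs : ∃ s ∈ E, (4 / 5 : ℝ) ^ p * (D.card : ℝ) ^ 2 ≤
      ∑ d ∈ D, ∑ d' ∈ D, (conv f (s + (d - d')) / B.card) ^ p := by
    by_contra! hlt
    have hEne : E.Nonempty := card_pos.1 (by exact_mod_cast hEpos)
    have h1 := sum_lt_sum_of_nonempty hEne hlt
    rw [sum_const, nsmul_eq_mul] at h1
    have h2 := lt_of_le_of_lt hsum h1
    have hD2 : (0 : ℝ) < (D.card : ℝ) ^ 2 := by positivity
    have h3 : (9 / 10 : ℝ) ^ p * C.card < E.card * (4 / 5) ^ p := by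
      by_contra! h
      have := mul_le_mul_of_nonneg_left h hD2.le
      linarith
    have h9 : (0 : ℝ) < (9 / 10) ^ p := by positivity
    have hγ : 0 < γ := by
      by_contra! h
      have : (0 : ℝ) < (4 / 5) ^ p := by positivity
      nlinarith
    have h4 : E.card * (4 / 5 : ℝ) ^ p ≤ E.card * ((9 / 10) ^ p * (γ / 2)) :=
      mul_le_mul_of_nonneg_left hpγ hEpos.le
    have h5 : (E.card : ℝ) * (γ / 2) ≤ C.card := by nlinarith
    have h6 := mul_le_mul_of_nonneg_left h5 h9.le
    linarith
  obtain ⟨s, _, hs⟩ := hs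
  have hmom : (4 / 5 : ℝ) ^ p * (D.card : ℝ) ^ 2 ≤
      ∑ d ∈ D, ∑ d' ∈ D, (corr f (d - d') / B.card) ^ p := by
    refine hs.trans ?_
    have := conv_le_corr f D s p
    simp only [div_pow, ← sum_div]
    gcongr
  -- unbalancing
  have hDD : ∀ d ∈ D, ∀ d' ∈ D, d - d' ∈ bohr Γ (κ * ρ₁) := by
    intro d hd d' hd'
    exact bohr_halfs_sub hodd Γ (by linarith) (sub_mem_bohr hd hd' (le_refl (ρ₃ + ρ₃)))
  have hub := unbalance (D ×ˢ D) (fun i => corr f (i.1 - i.2) / B.card)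
    (fun i => corr (ind A) (i.1 - i.2) / (α * A.card)) p hp hp6 ?_ ?_ ?_ ?_
  · rw [card_product, sum_product] at hub
    have hαA0 : 0 < α * A.card := by rw [hαA]; positivity
    simp only [div_pow, ← sum_div] at hub
    rw [le_div_iff₀ (by positivity)] at hub
    refine le_trans (le_of_eq ?_) hub
    push_cast
    rw [mul_pow, div_pow]; ring
  · intro k
    rw [sum_product]
    simp only [div_pow, ← sum_div]
    exact div_nonneg (corr_moment_nonneg f D k) (by positivity)
  · rw [card_product, sum_product]
    push_cast
    rw [← sq]; exact hmom
  · intro i _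
    exact div_nonneg (corr_ind_nonneg _ _) (by positivity)
  · intro i hi
    rw [mem_product] at hi
    have := hcorr _ (hDD _ hi.1 _ hi.2)
    have e : corr (ind A) (i.1 - i.2) / (α * A.card) - (1 + corr f (i.1 - i.2) / B.card) =
        (corr (ind A) (i.1 - i.2) / α ^ 2 - (B.card + corr f (i.1 - i.2))) / B.card := by
      rw [hαA]; exact aux_div _ _ _ _ hα.ne' hBc.ne'
    rw [e, abs_div, abs_of_pos hBc, div_le_iff₀ hBc]
    exact this

end Half
end KM

set_option linter.unusedSectionVars false
namespace KM
open Finset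
open scoped Pointwise

section Step
variable {G : Type*} [AddCommGroup G] [Fintype G] [DecidableEq G]

lemma norm_one_sub_mu (B : Finset G) (hB : B.Nonempty) (ψ : AddChar G ℂ) (c : ℝ)
    (h : ∀ x ∈ B, ‖1 - ψ x‖ ≤ c) : ‖1 - mu B ψ‖ ≤ c := by
  have hBc : (0 : ℝ) < B.card := by exact_mod_cast hB.card_pos
  have hBc' : (B.card : ℂ) ≠ 0 := by exact_mod_cast hB.card_pos.ne'
  have e : 1 - mu B ψ = (∑ x ∈ B, (1 - ψ x)) / B.card := by
    unfold mu; rw [sum_sub_distrib, sum_const, nsmul_eq_mul, mul_one]; field_simp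
  rw [e, norm_div, Complex.norm_natCast, div_le_iff₀ hBc]
  calc _ ≤ ∑ x ∈ B, ‖1 - ψ x‖ := norm_sum_le _ _
    _ ≤ ∑ x ∈ B, c := sum_le_sum h
    _ = _ := by rw [sum_const, nsmul_eq_mul, mul_comm]

lemma corr_ind_eq (A : Finset G) (hA : A.Nonempty) (x : G) :
    corr (ind A) x = A.card * avg A (ind A) x := by
  have hAc : (A.card : ℝ) ≠ 0 := by exact_mod_cast hA.card_pos.ne'
  unfold corr avg
  rw [mul_div_cancel₀ _ hAc]
  have : ∀ y, ind A (x + y) * ind A y = if y ∈ A then ind A (x + y) else 0 := by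
    intro y; by_cases h : y ∈ A <;> simp [ind, h]
  simp only [this, sum_ite_mem, univ_inter]

set_option maxHeartbeats 1000000 in
lemma final_increment {κ : ℝ} {m : ℕ} {Γ : Finset (AddChar G ℂ)}
    {ρ₃ ρ₄ ρ₅ : ℝ} (hκ : 0 < κ) (hκ1 : κ ≤ 1) (hm : 1 ≤ m) (hρ₃ : 0 < ρ₃) (hρ₄ : 0 < ρ₄)
    (hρ₅ : 0 < ρ₅)
    (hr3 : Reg κ m Γ ρ₃) (hr4 : Reg κ m Γ ρ₄) (hr5 : Reg κ m Γ ρ₅)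
    (h43 : 2 * ρ₄ ≤ κ * ρ₃) (h54 : ρ₅ ≤ κ * ρ₄)
    (A : Finset G) (hA : A.Nonempty) (α τ ε : ℝ) (hα : 0 < α) (q k r n : ℕ)
    (hq : 130 ≤ q) (hτ0 : 0 < τ) (hτ : τ ≤ α ^ q / 4) (hτ1 : τ ≤ 1)
    (hV : (5 / 4 * (α * A.card)) ^ q * ((bohr Γ ρ₃).card : ℝ) ^ 2 ≤
      ∑ d ∈ bohr Γ ρ₃, ∑ d' ∈ bohr Γ ρ₃, corr (ind A) (d - d') ^ q)
    (hε : 0 < ε) (hε1 : ε ≤ 1) (hk : 0 < k)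
    (hkε : 16 * Real.exp (-(k * ε ^ 2 / 4)) ≤ ε * τ)
    (hrε : 300 * r * ε ≤ 1) (hn : 1 ≤ n)
    (hnσ : 2 < (1 / 2 * (τ / 16) ^ k) * Real.exp (n / 32))
    (hmn : 2 / m * 2 ^ n ≤ τ / 200) (hrτ : (1 / 2 : ℝ) ^ (2 * r) * 2 ≤ τ / 100) :
    ∃ Γ' : Finset (AddChar G ℂ), Γ ⊆ Γ' ∧ Γ'.card ≤ Γ.card + n ∧
      ∀ ρ, 0 < ρ → ρ ≤ κ * ρ₅ → n * ρ ≤ τ / 200 →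
        ∃ x, 114 / 100 * α ≤ avg (bohr Γ' ρ) (ind A) x := by
  classical
  have hAc : (0 : ℝ) < A.card := by exact_mod_cast hA.card_pos
  set D := bohr Γ ρ₃ with hD
  have hDne : D.Nonempty := card_pos.1 (bohr_card_pos Γ hρ₃.le)
  have hDc : (0 : ℝ) < D.card := by exact_mod_cast hDne.card_pos
  set W := 6 / 5 * (α * A.card) with hW
  have hV0 : 0 < 5 / 4 * (α * (A.card : ℝ)) := by positivity
  obtain ⟨A', hA'D, hA'ne, hA'c, hbad⟩ := sift A D hDne q (5 / 4 * (α * A.card)) W τ (1 / 100)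
    hV0 (by positivity) (by norm_num) hτ0 hV (by
      have h1 : α ^ q * (A.card : ℝ) ^ q ≤ (5 / 4 * (α * A.card)) ^ q := by
        rw [← mul_pow]
        apply pow_le_pow_left₀ (by positivity)
        have : 0 < α * (A.card : ℝ) := by positivity
        linarith
      have h2 := mul_le_mul_of_nonneg_right hτ (by positivity : (0 : ℝ) ≤ (A.card : ℝ) ^ q)
      linarith) (by
      have h1 : W ^ q = (24 / 25) ^ q * (5 / 4 * (α * A.card)) ^ q := by
        rw [← mul_pow]; congr 1; rw [hW]; ring
      have h2 : (24 / 25 : ℝ) ^ q ≤ 1 / 200 := by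
        calc (24 / 25 : ℝ) ^ q ≤ (24 / 25) ^ 130 :=
              pow_le_pow_of_le_one (by norm_num) (by norm_num) hq
          _ ≤ _ := by norm_num
      rw [h1]
      have := mul_le_mul_of_nonneg_right h2 (pow_pos hV0 q).le
      linarith)
  have hA'cp : (0 : ℝ) < A'.card := by exact_mod_cast hA'ne.card_pos
  set B8 := bohr Γ ρ₄ with hB8
  have hB8ne : B8.Nonempty := card_pos.1 (bohr_card_pos Γ hρ₄.le)
  have hB8c : (0 : ℝ) < B8.card := by exact_mod_cast hB8ne.card_pos
  set Dp := bohr Γ (ρ₃ + κ * ρ₃) with hDp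
  have hDpc : (Dp.card : ℝ) ≤ 2 * D.card := reg_two hκ.le hm hρ₃ hr3
  obtain ⟨y, A₂, hA₂A', hA₂B, hA₂c, hbad2⟩ := localise A' D B8 Dp hA'ne hA'D hB8ne
    (fun a ha b hb => sub_mem_bohr ha hb (by linarith)) hDpc τ (1 / 100) hτ0 (by norm_num) hA'c
    (fun x => if corr (ind A) x < W then (1 : ℝ) else 0)
    (fun x => by split_ifs <;> norm_num) hbad
  have hA₂cp : (0 : ℝ) < A₂.card := lt_of_lt_of_le (by positivity) hA₂c
  have hA₂ne : A₂.Nonempty := card_pos.1 (by exact_mod_cast hA₂cp)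
  set S := (image₂ (fun a a' => a - a') A' A₂).filter fun x => W ≤ corr (ind A) x with hS
  have hSc : (S.card : ℝ) ≤ 2 * D.card := by
    refine le_trans ?_ hDpc
    have hsub : S ⊆ Dp.image fun z => z - y := by
      intro x hx
      obtain ⟨a, ha, a', ha', rfl⟩ := mem_image₂.1 (mem_filter.1 hx).1
      rw [mem_image]
      refine ⟨a - (a' - y), sub_mem_bohr (hA'D ha) (hA₂B a' ha') (by linarith), by abel⟩
    exact_mod_cast (card_le_card hsub).trans card_image_le
  set B9 := bohr Γ ρ₅ with hB9
  have hB9ne : B9.Nonempty := card_pos.1 (bohr_card_pos Γ hρ₅.le)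
  set Y := (bohr Γ (ρ₄ + κ * ρ₄)).image fun z => z + y with hY
  have hYc : τ / 16 * (Y.card : ℝ) ≤ A₂.card := by
    have h1 : (Y.card : ℝ) ≤ 2 * B8.card := by
      refine le_trans ?_ (reg_two hκ.le hm hρ₄ hr4)
      exact_mod_cast card_image_le
    have := mul_le_mul_of_nonneg_left h1 (by positivity : 0 ≤ τ / 16)
    linarith
  obtain ⟨T, hTB, hTne, hTc, hap⟩ := croot_sisask A' A₂ S Dp B9 Y hA'ne hA₂ne (by
      intro x hx a'' ha''
      obtain ⟨a, ha, a', ha', rfl⟩ := mem_image₂.1 (mem_filter.1 hx).1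
      have e : a - a' + a'' = a - ((a' - y) - (a'' - y)) := by abel
      rw [e]
      exact sub_mem_bohr (hA'D ha) (sub_mem_bohr (hA₂B a' ha') (hA₂B a'' ha'') le_rfl)
        (by linarith)) (by
      intro a ha t ht
      rw [hY, mem_image]
      exact ⟨a - y + t, add_mem_bohr (hA₂B a ha) ht (by linarith), by abel⟩)
    k hk ε hε hε1 hB9ne (τ / 16) (by positivity) hYc
  set G0 := avg A' (avg (-A₂) (ind S)) with hG0
  have hap' : ∀ x, ∀ t ∈ T, ∀ s ∈ T, |G0 (x + (t - s)) - G0 x| ≤ 3 * ε := by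
    intro x t ht s hs
    refine (hap x t ht s hs).trans ?_
    have : 8 * Real.exp (-(k * ε ^ 2 / 4)) * Dp.card / A'.card ≤ ε := by
      rw [div_le_iff₀ hA'cp]
      set E := Real.exp (-(k * ε ^ 2 / 4)) with hE
      have hE0 : 0 < E := Real.exp_pos _
      have h1 := mul_le_mul_of_nonneg_left hDpc (by positivity : 0 ≤ 8 * E)
      have h2 := mul_le_mul_of_nonneg_right hkε hDc.le
      have h3 := mul_le_mul_of_nonneg_left hA'c hε.le
      linarith
    linarith
  have hclose := avg2_iter_close T hTne hap' r 0
  have hG00 : 98 / 100 ≤ G0 0 := by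
    have e : G0 0 = (∑ a ∈ A', ∑ a' ∈ A₂, ind S (a - a')) / (A'.card * A₂.card) := by
      simp only [hG0, avg, card_neg]
      rw [← sum_div, div_div, mul_comm]
      congr 1
      refine sum_congr rfl fun a _ => ?_
      rw [sum_neg_index]
      refine sum_congr rfl fun a' _ => ?_
      congr 1; abel
    rw [e, le_div_iff₀ (by positivity)]
    have e2 : ∀ a ∈ A', ∀ a' ∈ A₂, ind S (a - a') =
        1 - (if corr (ind A) (a - a') < W then (1 : ℝ) else 0) := by
      intro a ha a' ha'
      have hi : ind S (a - a') = if a - a' ∈ S then 1 else 0 := rfl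
      rw [hi]
      have hm : a - a' ∈ image₂ (fun a a' => a - a') A' A₂ := mem_image₂_of_mem ha ha'
      by_cases h : corr (ind A) (a - a') < W
      · rw [if_pos h, if_neg]; · norm_num
        rw [hS, mem_filter]; intro h'; exact absurd h'.2 (not_le.2 h)
      · rw [if_neg h, if_pos]; · norm_num
        rw [hS, mem_filter]; exact ⟨hm, not_lt.1 h⟩
    rw [sum_congr rfl fun a ha => sum_congr rfl fun a' ha' => e2 a ha a' ha']
    simp only [sum_sub_distrib, sum_const, nsmul_eq_mul, mul_one]
    linarith
  obtain ⟨Λ, hΛc, hΛ⟩ := chang B9 T hTB hTne _ hTc n hn hnσ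
  refine ⟨Γ ∪ Λ, subset_union_left, (card_union_le _ _).trans (by omega), ?_⟩
  intro ρ hρ0 hρ hnρ
  set B10 := bohr (Γ ∪ Λ) ρ with hB10
  have hB10ne : B10.Nonempty := card_pos.1 (bohr_card_pos _ hρ0.le)
  have hspec : ∀ ψ : AddChar G ℂ, 1 / 2 ≤ ‖mu T ψ‖ → ‖1 - mu B10 ψ‖ ≤ τ / 100 := by
    intro ψ hψ
    obtain ⟨ζ, e, he, hζ, rfl⟩ := hΛ ψ hψ
    refine norm_one_sub_mu B10 hB10ne _ _ fun x hx => ?_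
    have hxΓ : x ∈ bohr Γ (κ * ρ₅) := bohr_mono Γ hρ (bohr_anti subset_union_left ρ hx)
    have h1 := char_small_of_reg hκ.le hκ1 hρ₅ hr5 ζ x hxΓ
    have h2 : ‖1 - ζ x‖ ≤ τ / 200 := by
      have h3 : (1 / 2 : ℝ) ^ n * ‖1 - ζ x‖ ≤ 2 / m :=
        (mul_le_mul_of_nonneg_right hζ.le (norm_nonneg _)).trans h1
      have h4 := mul_le_mul_of_nonneg_right h3 (by positivity : (0 : ℝ) ≤ 2 ^ n)
      have h5 : (1 / 2 : ℝ) ^ n * ‖1 - ζ x‖ * 2 ^ n = ‖1 - ζ x‖ := by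
        rw [mul_right_comm, ← mul_pow]; norm_num
      linarith
    have h3 := norm_one_sub_prod Λ e he x ρ fun l hl =>
      mem_bohr.1 hx l (mem_union_right _ hl)
    have h4 : (Λ.card : ℝ) * ρ ≤ n * ρ := by
      apply mul_le_mul_of_nonneg_right _ hρ0.le
      exact_mod_cast hΛc
    rw [AddChar.mul_apply]
    have e1 : 1 - ζ x * (∏ l ∈ Λ, l ^ e l) x = (1 - ζ x) + ζ x * (1 - (∏ l ∈ Λ, l ^ e l) x) := by
      ring
    rw [e1]
    refine (norm_add_le _ _).trans ?_
    rw [norm_mul, AddChar.norm_apply, one_mul]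
    linarith
  have hfd := fourier_diff S A' (-A₂) T B10 hA'ne r (τ / 100) (by
    intro ψ
    rcases le_or_gt (1 / 2) ‖mu T ψ‖ with h | h
    · have h1 : ‖mu T ψ‖ ^ (2 * r) ≤ 1 := pow_le_one₀ (norm_nonneg _) (norm_mu_le_one _ _)
      have h2 := hspec ψ h
      have := mul_le_mul h1 h2 (norm_nonneg _) (by norm_num)
      linarith
    · have h1 : ‖mu T ψ‖ ^ (2 * r) ≤ (1 / 2) ^ (2 * r) :=
        pow_le_pow_left₀ (norm_nonneg _) h.le _
      have h2 : ‖1 - mu B10 ψ‖ ≤ 2 := by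
        refine (norm_sub_le _ _).trans ?_
        rw [norm_one]; linarith [norm_mu_le_one B10 ψ]
      exact (mul_le_mul h1 h2 (norm_nonneg _) (by positivity)).trans hrτ)
  rw [← hG0] at hfd
  have hsqrt : τ / 100 * Real.sqrt (S.card / A'.card) ≤ 2 / 100 := by
    have h1 : (S.card : ℝ) / A'.card ≤ (2 / τ) ^ 2 := by
      have h2 : (S.card : ℝ) / A'.card ≤ 2 / τ := by
        rw [div_le_div_iff₀ hA'cp hτ0]
        nlinarith
      have h3 : 1 ≤ 2 / τ := by rw [le_div_iff₀ hτ0]; linarith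
      nlinarith
    have h2 : Real.sqrt (S.card / A'.card) ≤ 2 / τ := by
      rw [Real.sqrt_le_left (by positivity)]; exact h1
    have h3 := mul_le_mul_of_nonneg_left h2 (by positivity : 0 ≤ τ / 100)
    have h4 : τ / 100 * (2 / τ) = 2 / 100 := by field_simp
    linarith
  have hlow : 95 / 100 ≤ avg B10 ((avg2 T)^[r] G0) 0 := by
    have a1 := (abs_le.1 hclose).1
    have a2 := (abs_le.1 hfd).2
    have a3 : (r : ℝ) * (3 * ε) ≤ 1 / 100 := by linarith
    linarith
  -- comparison
  obtain ⟨x, hx⟩ := Finite.exists_max (avg B10 (ind A))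
  refine ⟨x, ?_⟩
  have hmono : ∀ z, (6 / 5 * α) * ind S z ≤ avg A (ind A) z := by
    intro z
    by_cases h : z ∈ S
    · have hi : ind S z = 1 := by simp [ind, h]
      rw [hi]
      have h1 := (mem_filter.1 h).2
      rw [corr_ind_eq A hA] at h1
      rw [mul_one]
      have h2 : (6 / 5 * α) * A.card ≤ avg A (ind A) z * A.card := by rw [hW] at h1; linarith
      exact le_of_mul_le_mul_right h2 hAc
    · have hi : ind S z = 0 := by simp [ind, h]
      rw [hi, mul_zero]; exact avg_nonneg _ (fun _ => ind_nonneg _ _) _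
  have hcomp : avg B10 ((avg2 T)^[r] (avg A' (avg (-A₂) fun z => (6 / 5 * α) * ind S z))) 0 ≤
      avg B10 ((avg2 T)^[r] (avg A' (avg (-A₂) (avg A (ind A))))) 0 :=
    avg_mono _ (fun z => avg2_iter_mono _ (fun z => avg_mono _ (fun z => avg_mono _ hmono z) z) r z) 0
  rw [avg_const_mul, avg_const_mul, avg2_iter_const_mul, avg_const_mul] at hcomp
  simp only at hcomp
  rw [← hG0] at hcomp
  have eR : avg B10 ((avg2 T)^[r] (avg A' (avg (-A₂) (avg A (ind A))))) 0 =
      (avg2 T)^[r] (avg A' (avg (-A₂) (avg A (avg B10 (ind A))))) 0 := by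
    rw [avg_avg2_iter_comm, avg_comm B10 A', avg_comm B10 (-A₂), avg_comm B10 A]
  rw [eR] at hcomp
  have hup := avg2_iter_le T hTne (fun z => avg_le A' hA'ne (fun z => avg_le (-A₂) hA₂ne.neg
    (fun z => avg_le A hA hx z) z) z) r 0
  have : 6 / 5 * α * (95 / 100) ≤ 6 / 5 * α * avg B10 ((avg2 T)^[r] G0) 0 :=
    mul_le_mul_of_nonneg_left hlow (by positivity)
  linarith

lemma avg_reg_lower {κ : ℝ} {m : ℕ} {Γ : Finset (AddChar G ℂ)} {ρ : ℝ} (hκ : 0 ≤ κ)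
    (hρ : 0 < ρ) (hreg : Reg κ m Γ ρ) (A : Finset G) (x v : G) (hv : v ∈ bohr Γ (κ * ρ)) :
    avg (bohr Γ ρ) (ind A) x - 1 / m ≤ avg (bohr Γ ρ) (ind A) (x + v) := by
  set B := bohr Γ ρ with hB
  have hBc : (0 : ℝ) < B.card := by exact_mod_cast bohr_card_pos Γ hρ.le
  have hκρ : 0 ≤ κ * ρ := by positivity
  set B' := bohr Γ (ρ - κ * ρ) with hB'
  have hsub : B' ⊆ B := bohr_mono Γ (by linarith)
  have hsd := reg_sdiff hκ hρ hreg
  have h1 : ∑ t ∈ B, ind A (x + t) ≤ ∑ t ∈ B', ind A (x + t) + B.card / m := by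
    rw [← sum_sdiff hsub, add_comm]
    have : ∑ t ∈ B \ B', ind A (x + t) ≤ ((B \ B').card : ℝ) := by
      calc _ ≤ ∑ t ∈ B \ B', (1 : ℝ) := sum_le_sum fun t _ => ind_le_one _ _
        _ = _ := by simp
    linarith
  have h2 : ∑ t ∈ B', ind A (x + t) ≤ ∑ t ∈ B, ind A (x + v + t) := by
    have e : ∑ t ∈ B', ind A (x + t) = ∑ t ∈ B'.image (fun t => t - v), ind A (x + v + t) := by
      rw [sum_image (by intro a _ b _ h; simpa using h)]
      refine sum_congr rfl fun t _ => ?_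
      congr 1; abel
    rw [e]
    apply sum_le_sum_of_subset_of_nonneg
    · intro z hz
      obtain ⟨t, ht, rfl⟩ := mem_image.1 hz
      exact sub_mem_bohr ht hv (by linarith)
    · intro _ _ _; exact ind_nonneg _ _
  unfold avg
  rw [div_sub' hBc.ne', div_le_div_iff_of_pos_right hBc]
  have e : (B.card : ℝ) * (1 / m) = B.card / m := by ring
  rw [e]; linarith

lemma stage1 {κ : ℝ} {m : ℕ} {Γ : Finset (AddChar G ℂ)} {ρ ρ₁ ρ₂ : ℝ} (hκ : 0 ≤ κ)
    (hρ : 0 < ρ) (hρ₁0 : 0 < ρ₁) (hρ₂0 : 0 < ρ₂) (hm : 0 < m) (hreg : Reg κ m Γ ρ)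
    (h1 : ρ₁ ≤ κ * ρ) (h2 : ρ₂ ≤ κ * ρ)
    (A : Finset G) (x₀ : G) (α : ℝ) (hα : α ≤ avg (bohr Γ ρ) (ind A) x₀) (hmα : 200 ≤ m * α)
    (hu1 : ∀ x, avg (bohr Γ ρ₁) (ind A) x ≤ 101 / 100 * α)
    (hu2 : ∀ x, avg (bohr Γ ρ₂) (ind A) x ≤ 101 / 100 * α) :
    ∃ t, 98 / 100 * α ≤ avg (bohr Γ ρ₁) (ind A) t ∧ 98 / 100 * α ≤ avg (bohr Γ ρ₂) (ind A) t := by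
  have hmR : (0 : ℝ) < m := by exact_mod_cast hm
  have hm1 : 1 / (m : ℝ) ≤ α / 200 := by rw [div_le_iff₀ hmR]; linarith
  set B := bohr Γ ρ with hB
  have hBne : B.Nonempty := card_pos.1 (bohr_card_pos Γ hρ.le)
  have hBc : (0 : ℝ) < B.card := by exact_mod_cast hBne.card_pos
  have key : ∀ σ, 0 < σ → σ ≤ κ * ρ → (199 / 200 * α) * B.card ≤
      ∑ u ∈ B, avg (bohr Γ σ) (ind A) (x₀ + u) := by
    intro σ hσ0 hσ
    have hne : (bohr Γ σ).Nonempty := card_pos.1 (bohr_card_pos Γ hσ0.le)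
    have hc : (0 : ℝ) < (bohr Γ σ).card := by exact_mod_cast hne.card_pos
    have e : avg B (avg (bohr Γ σ) (ind A)) x₀ = avg (bohr Γ σ) (avg B (ind A)) x₀ := by
      rw [avg_comm]
    have h3 : 199 / 200 * α ≤ avg (bohr Γ σ) (avg B (ind A)) x₀ := by
      rw [avg, le_div_iff₀ hc]
      calc 199 / 200 * α * ((bohr Γ σ).card : ℝ) = ∑ t ∈ bohr Γ σ, (199 / 200 * α) := by
            rw [sum_const, nsmul_eq_mul, mul_comm]
        _ ≤ _ := by
          refine sum_le_sum fun t ht => ?_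
          have := avg_reg_lower hκ hρ hreg A x₀ t (bohr_mono Γ hσ ht)
          linarith
    rw [← e] at h3
    unfold avg at h3
    rw [le_div_iff₀ hBc] at h3
    exact h3
  have k1 := key ρ₁ hρ₁0 h1
  have k2 := key ρ₂ hρ₂0 h2
  have : ∃ u ∈ B, 199 / 100 * α ≤ avg (bohr Γ ρ₁) (ind A) (x₀ + u) + avg (bohr Γ ρ₂) (ind A) (x₀ + u) := by
    by_contra! hlt
    have h3 := sum_lt_sum_of_nonempty hBne hlt
    rw [sum_const, nsmul_eq_mul, sum_add_distrib] at h3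
    linarith
  obtain ⟨u, _, hu⟩ := this
  exact ⟨x₀ + u, by linarith [hu2 (x₀ + u)], by linarith [hu1 (x₀ + u)]⟩

end Step
end KM

set_option linter.unusedSectionVars false
namespace KM
open Finset
open scoped Pointwise

section StepH
variable {G : Type*} [AddCommGroup G] [Fintype G] [DecidableEq G]

lemma avg_translate (B A : Finset G) (t : G) :
    avg B (ind A) t * B.card = ((B.filter fun u => t + u ∈ A).card : ℝ) := by
  rcases B.eq_empty_or_nonempty with rfl | hB
  · simp
  have hBc : (B.card : ℝ) ≠ 0 := by exact_mod_cast hB.card_pos.ne'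
  unfold avg ind
  rw [div_mul_cancel₀ _ hBc, card_filter]
  push_cast
  rfl

set_option maxHeartbeats 1000000 in
lemma step (hodd : Odd (Fintype.card G)) {κ : ℝ} {m d : ℕ} {Γ : Finset (AddChar G ℂ)} {ρ : ℝ}
    (hm : 1 ≤ m) (hκ : 0 < κ) (hκd : 4 * ((6 * d * m + 1 : ℕ) : ℝ) * κ ≤ 1)
    (hρ : 0 < ρ) (hρ1 : ρ ≤ 1) (hreg : Reg κ m Γ ρ)
    (A : Finset G) (hAP : ∀ x ∈ A, ∀ y ∈ A, ∀ z ∈ A, x + y = z + z → x = y)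
    (x₀ : G) (α τ ε : ℝ) (hα : 0 < α) (hα0 : α ≤ avg (bohr Γ ρ) (ind A) x₀)
    (hmα : 200 ≤ m * α) (hsize : 130 ≤ α ^ 2 * (bohr Γ (κ / 2 * ρ)).card)
    (p k r n : ℕ) (hp : Even p) (hp6 : 44 ≤ p)
    (hpγ : (4 / 5 : ℝ) ^ p ≤ (9 / 10) ^ p * ((98 / 100 * α) / 2))
    (hΓ : Γ.card + n ≤ d) (hτ0 : 0 < τ) (hτ : τ ≤ (98 / 100 * α) ^ (3 * p) / 4) (hτ1 : τ ≤ 1)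
    (hε : 0 < ε) (hε1 : ε ≤ 1) (hk : 0 < k)
    (hkε : 16 * Real.exp (-(k * ε ^ 2 / 4)) ≤ ε * τ)
    (hrε : 300 * r * ε ≤ 1) (hn : 1 ≤ n)
    (hnσ : 2 < (1 / 2 * (τ / 16) ^ k) * Real.exp (n / 32))
    (hmn : 2 / m * 2 ^ n ≤ τ / 200) (hrτ : (1 / 2 : ℝ) ^ (2 * r) * 2 ≤ τ / 100)
    (hnκ : n * κ ≤ τ / 200) :
    ∃ (Γ' : Finset (AddChar G ℂ)) (ρ' : ℝ) (x : G), Γ'.card ≤ Γ.card + n ∧ (κ / 4) ^ 6 * ρ ≤ ρ' ∧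
      ρ' ≤ ρ ∧ Reg κ m Γ' ρ' ∧ 101 / 100 * α ≤ avg (bohr Γ' ρ') (ind A) x := by
  classical
  have hκ1 : κ ≤ 1 / 4 := by
    have h1 : (1 : ℝ) ≤ ((6 * d * m + 1 : ℕ) : ℝ) := by exact_mod_cast Nat.le_add_left 1 _
    have := mul_le_mul_of_nonneg_right h1 hκ.le
    linarith
  have hm0 : 0 < m := hm
  have hh := halfs_card Γ
  obtain ⟨ρ₁, h1a, h1b, hr1⟩ := exists_reg d m hm0 κ hκ hκd Γ (by omega) (κ * ρ) (by positivity)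
  have hρ₁ : 0 < ρ₁ := lt_of_lt_of_le (by positivity) h1a
  obtain ⟨ρ₂, h2a, h2b, hr2⟩ := exists_reg d m hm0 κ hκ hκd Γ (by omega) (κ * ρ₁ / 2) (by positivity)
  have hρ₂ : 0 < ρ₂ := lt_of_lt_of_le (by positivity) h2a
  have hκρ : κ * ρ ≤ ρ := by nlinarith
  have hκρ₁ : κ * ρ₁ ≤ ρ₁ := by nlinarith
  have hc6 : (κ / 4) ^ 6 * ρ ≤ κ / 4 * (κ / 4 * ρ) := by
    have : (κ / 4) ^ 6 ≤ (κ / 4) ^ 2 :=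
      pow_le_pow_of_le_one (by positivity) (by linarith) (by norm_num)
    have := mul_le_mul_of_nonneg_right this hρ.le
    linarith
  have hκρ' : κ / 4 * ρ ≤ ρ₁ := by
    have : 0 < κ * ρ := by positivity
    linarith
  have hκρ2 : κ / 4 * (κ / 4 * ρ) ≤ ρ₂ := by
    have := mul_le_mul_of_nonneg_left hκρ' (by positivity : 0 ≤ κ / 4)
    linarith
  by_cases hu1 : ∃ x, 101 / 100 * α ≤ avg (bohr Γ ρ₁) (ind A) x
  · obtain ⟨x, hx⟩ := hu1
    refine ⟨Γ, ρ₁, x, by omega, ?_, by linarith, hr1, hx⟩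
    have := mul_le_mul_of_nonneg_left hκρ' (by positivity : 0 ≤ κ / 4)
    have : κ * ρ₁ / 4 ≤ ρ₁ := by linarith
    linarith
  by_cases hu2 : ∃ x, 101 / 100 * α ≤ avg (bohr Γ ρ₂) (ind A) x
  · obtain ⟨x, hx⟩ := hu2
    exact ⟨Γ, ρ₂, x, by omega, by linarith, by linarith, hr2, hx⟩
  push Not at hu1 hu2
  obtain ⟨t, ht1, ht2⟩ := stage1 hκ.le hρ hρ₁ hρ₂ hm0 hreg h1b (by linarith) A x₀ α hα0 hmα
    (fun x => (hu1 x).le) (fun x => (hu2 x).le)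
  set B1 := bohr Γ ρ₁ with hB1
  set B2 := bohr Γ ρ₂ with hB2
  have hB1c : (0 : ℝ) < B1.card := by exact_mod_cast bohr_card_pos Γ hρ₁.le
  have hB2c : (0 : ℝ) < B2.card := by exact_mod_cast bohr_card_pos Γ hρ₂.le
  set A1 := B1.filter fun u => t + u ∈ A with hA1
  set C := B2.filter fun u => t + u ∈ A with hC
  have eA1 := avg_translate B1 A t
  have eC := avg_translate B2 A t
  rw [← hA1] at eA1
  rw [← hC] at eC
  set α1 := avg B1 (ind A) t with hα1
  have hα1p : 0 < α1 := lt_of_lt_of_le (by positivity) ht1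
  have hA1ne : A1.Nonempty := by
    rw [← card_pos]
    have : (0 : ℝ) < A1.card := by rw [← eA1]; positivity
    exact_mod_cast this
  obtain ⟨ρ₃, h3a, h3b, hr3⟩ :=
    exists_reg d m hm0 κ hκ hκd (halfs Γ) (by omega) (κ * ρ₂ / 2) (by positivity)
  have hρ₃ : 0 < ρ₃ := lt_of_lt_of_le (by positivity) h3a
  obtain ⟨ρ₄, h4a, h4b, hr4⟩ :=
    exists_reg d m hm0 κ hκ hκd (halfs Γ) (by omega) (κ * ρ₃ / 2) (by positivity)
  have hρ₄ : 0 < ρ₄ := lt_of_lt_of_le (by positivity) h4a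
  obtain ⟨ρ₅, h5a, h5b, hr5⟩ :=
    exists_reg d m hm0 κ hκ hκd (halfs Γ) (by omega) (κ * ρ₄ / 2) (by positivity)
  have hρ₅ : 0 < ρ₅ := lt_of_lt_of_le (by positivity) h5a
  have hκ2 : ∀ z, 0 < z → κ * z ≤ z := fun z hz => by nlinarith
  have k2 := hκ2 ρ₂ hρ₂
  have k3 := hκ2 ρ₃ hρ₃
  have k4 := hκ2 ρ₄ hρ₄
  have k5 := hκ2 ρ₅ hρ₅
  have h31 : 4 * ρ₃ ≤ κ * ρ₁ := by linarith
  have hs2 := stage2 hodd hκ hρ₁ hρ₂ hρ₃ hr1 hm0 (reg_two hκ.le hm hρ₂ hr2)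
    (by linarith) (by linarith) h31 A1 C (filter_subset _ _) (filter_subset _ _)
    (by
      intro y hy y' hy' z hz h
      have := hAP _ (mem_filter.1 hy).2 _ (mem_filter.1 hy').2 _ (mem_filter.1 hz).2
        (by rw [show t + y + (t + y') = t + t + (y + y') by abel, h]; abel)
      exact add_left_cancel this)
    α1 hα1p eA1.symm (by
      have := mul_le_mul_of_nonneg_left ht1 (by positivity : (0 : ℝ) ≤ m)
      linarith) (by
      have hb : ((bohr Γ (κ / 2 * ρ)).card : ℝ) ≤ B1.card := by
        exact_mod_cast card_le_card (bohr_mono Γ (by linarith))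
      have hsq : 24 / 25 * α ^ 2 ≤ α1 ^ 2 := by
        have := pow_le_pow_left₀ (by positivity) ht1 2
        have : 0 < α ^ 2 := by positivity
        nlinarith
      have := mul_le_mul hsq hb (by positivity) (by positivity)
      linarith)
    (98 / 100 * α) (by rw [← eC]; exact mul_le_mul_of_nonneg_right ht2 hB2c.le) p hp (by omega) hpγ
  obtain ⟨Γ', -, hΓ'c, hΓ'⟩ := final_increment hκ (by linarith) hm hρ₃ hρ₄ hρ₅ hr3 hr4 hr5
    (by linarith) (by linarith [mul_pos hκ hρ₄]) A1 hA1ne α1 τ ε hα1p (3 * p) k r n (by omega) hτ0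
    (hτ.trans (by
      have := pow_le_pow_left₀ (by positivity) ht1 (3 * p)
      linarith)) hτ1 hs2 hε hε1 hk hkε hrε hn hnσ hmn hrτ
  obtain ⟨ρ', h6a, h6b, hr6⟩ :=
    exists_reg d m hm0 κ hκ hκd Γ' (by omega) (κ * ρ₅) (by positivity)
  have hρ' : 0 < ρ' := lt_of_lt_of_le (by positivity) h6a
  have hκle : ρ' ≤ κ := by
    have : ρ₅ ≤ 1 := by linarith
    have := mul_le_mul_of_nonneg_left this hκ.le
    linarith
  obtain ⟨x, hx⟩ := hΓ' ρ' hρ' h6b (by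
    have := mul_le_mul_of_nonneg_left hκle (by positivity : (0 : ℝ) ≤ n)
    linarith)
  refine ⟨Γ', ρ', t + x, by omega, ?_, by linarith, hr6, ?_⟩
  · have i3 := mul_le_mul_of_nonneg_left hκρ2 (by positivity : 0 ≤ κ / 4)
    have j3 : κ / 4 * ρ₂ ≤ ρ₃ := by linarith
    have i4 := mul_le_mul_of_nonneg_left (i3.trans j3) (by positivity : 0 ≤ κ / 4)
    have j4 : κ / 4 * ρ₃ ≤ ρ₄ := by linarith
    have i5 := mul_le_mul_of_nonneg_left (i4.trans j4) (by positivity : 0 ≤ κ / 4)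
    have j5 : κ / 4 * ρ₄ ≤ ρ₅ := by linarith
    have i6 := mul_le_mul_of_nonneg_left (i5.trans j5) (by positivity : 0 ≤ κ / 4)
    have j6 : κ / 4 * ρ₅ ≤ ρ' := by
      have : 0 < κ * ρ₅ := by positivity
      linarith
    calc (κ / 4) ^ 6 * ρ = κ / 4 * (κ / 4 * (κ / 4 * (κ / 4 * (κ / 4 * (κ / 4 * ρ))))) := by ring
      _ ≤ ρ' := i6.trans j6
  · have hle : avg (bohr Γ' ρ') (ind A1) x ≤ avg (bohr Γ' ρ') (ind A) (t + x) := by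
      unfold avg
      apply div_le_div_of_nonneg_right _ (by positivity)
      refine sum_le_sum fun u _ => ?_
      unfold ind
      by_cases h : x + u ∈ A1
      · rw [if_pos h, if_pos]
        rw [add_assoc]; exact (mem_filter.1 h).2
      · rw [if_neg h]; split_ifs <;> norm_num
    linarith

end StepH
end KM

set_option linter.unusedSectionVars false
namespace KM
open Finset
open scoped Pointwise

section IterI
variable {G : Type*} [AddCommGroup G] [Fintype G] [DecidableEq G]

lemma avg_ind_le_one (B A : Finset G) (x : G) : avg B (ind A) x ≤ 1 := by
  unfold avg
  apply div_le_one_of_le₀ _ (by positivity)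
  calc _ ≤ ∑ t ∈ B, (1 : ℝ) := sum_le_sum fun t _ => ind_le_one _ _
    _ = _ := by simp

set_option maxHeartbeats 1000000 in
lemma iterate_step (hodd : Odd (Fintype.card G)) {κ : ℝ} {m J e : ℕ}
    (hm : 1 ≤ m) (hκ : 0 < κ) (p k r n : ℕ)
    (hκd : 4 * ((6 * (J * n) * m + 1 : ℕ) : ℝ) * κ ≤ 1) (he : 1 ≤ 2 ^ e * (κ / 4))
    (A : Finset G) (hAP : ∀ x ∈ A, ∀ y ∈ A, ∀ z ∈ A, x + y = z + z → x = y)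
    (α τ ε : ℝ) (hα : 0 < α) (hα0 : α * Fintype.card G ≤ A.card)
    (hmα : 200 ≤ m * α)
    (hG : (130 : ℝ) * 64 ^ (J * n * (e * (6 * J + 1) + 1)) ≤ α ^ 2 * Fintype.card G)
    (hp : Even p) (hp6 : 44 ≤ p)
    (hpγ : (4 / 5 : ℝ) ^ p ≤ (9 / 10) ^ p * ((98 / 100 * α) / 2))
    (hτ0 : 0 < τ) (hτ : τ ≤ (98 / 100 * α) ^ (3 * p) / 4) (hτ1 : τ ≤ 1)
    (hε : 0 < ε) (hε1 : ε ≤ 1) (hk : 0 < k)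
    (hkε : 16 * Real.exp (-(k * ε ^ 2 / 4)) ≤ ε * τ)
    (hrε : 300 * r * ε ≤ 1) (hn : 1 ≤ n)
    (hnσ : 2 < (1 / 2 * (τ / 16) ^ k) * Real.exp (n / 32))
    (hmn : 2 / m * 2 ^ n ≤ τ / 200) (hrτ : (1 / 2 : ℝ) ^ (2 * r) * 2 ≤ τ / 100)
    (hnκ : n * κ ≤ τ / 200) (j : ℕ) (hj : j ≤ J) :
    ∃ (Γ : Finset (AddChar G ℂ)) (ρ : ℝ) (x : G), Γ.card ≤ j * n ∧ (κ / 4) ^ (6 * j) ≤ ρ ∧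
      ρ ≤ 1 ∧ Reg κ m Γ ρ ∧ (101 / 100) ^ j * α ≤ avg (bohr Γ ρ) (ind A) x := by
  have hκ1 : κ ≤ 1 := by
    have h1 : (1 : ℝ) ≤ ((6 * (J * n) * m + 1 : ℕ) : ℝ) := by exact_mod_cast Nat.le_add_left 1 _
    have := mul_le_mul_of_nonneg_right h1 hκ.le
    linarith
  induction j with
  | zero =>
    have hu : ∀ σ, bohr (∅ : Finset (AddChar G ℂ)) σ = univ := by
      intro σ; ext x; simp [mem_bohr]
    refine ⟨∅, 1, 0, by simp, by simp, le_rfl, ?_, ?_⟩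
    · unfold Reg
      rw [hu, hu]
      have : (0 : ℝ) ≤ 1 / m * (univ : Finset G).card := by positivity
      linarith
    · have hc : (0 : ℝ) < (univ : Finset G).card := by exact_mod_cast univ_nonempty.card_pos
      have h := avg_translate (univ : Finset G) A 0
      have h2 : ((univ : Finset G).filter fun u => 0 + u ∈ A) = A := by ext; simp
      rw [h2] at h
      rw [hu, pow_zero, one_mul]
      refine le_of_mul_le_mul_right ?_ hc
      rw [h, card_univ]; exact hα0
  | succ j ih =>
    obtain ⟨Γ, ρ, x, hΓ, hρa, hρ1, hreg, hx⟩ := ih (by omega)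
    have hρ : 0 < ρ := lt_of_lt_of_le (by positivity) hρa
    have hαj : α ≤ (101 / 100) ^ j * α := by
      have : (1 : ℝ) ≤ (101 / 100) ^ j := one_le_pow₀ (by norm_num)
      nlinarith
    have hαj0 : 0 < (101 / 100) ^ j * α := by positivity
    have hΓJ : Γ.card + n ≤ J * n := by
      have : (j + 1) * n ≤ J * n := Nat.mul_le_mul_right n hj
      nlinarith
    obtain ⟨Γ', ρ', x', h1, h2, h3, h4, h5⟩ := step hodd hm hκ hκd hρ hρ1 hreg A hAP x
      ((101 / 100) ^ j * α) τ ε hαj0 hx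
      (hmα.trans (mul_le_mul_of_nonneg_left hαj (by positivity))) (by
        have hσ : 0 < κ / 2 * ρ := by positivity
        have hlow := bohr_card_lower Γ hσ (e * (6 * J + 1) + 1) (by
          have b1 : (κ / 4) ^ (6 * J + 1) ≤ κ / 2 * ρ := by
            have c1 : (κ / 4) ^ (6 * J) ≤ (κ / 4) ^ (6 * j) :=
              pow_le_pow_of_le_one (by positivity) (by linarith) (by omega)
            rw [pow_succ, mul_comm]
            exact mul_le_mul (by linarith) (c1.trans hρa) (by positivity) (by positivity)
          have b2 : (1 : ℝ) ≤ (2 ^ e * (κ / 4)) ^ (6 * J + 1) := one_le_pow₀ he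
          rw [mul_pow, ← pow_mul] at b2
          have b3 := mul_le_mul_of_nonneg_left b1
            (by positivity : (0 : ℝ) ≤ 2 ^ (e * (6 * J + 1)))
          rw [pow_succ]
          linarith)
        have hexp : (64 : ℝ) ^ (Γ.card * (e * (6 * J + 1) + 1)) ≤
            64 ^ (J * n * (e * (6 * J + 1) + 1)) :=
          pow_le_pow_right₀ (by norm_num) (Nat.mul_le_mul_right _ (by omega))
        have hlow' : (Fintype.card G : ℝ) ≤ (bohr Γ (κ / 2 * ρ)).card *
            64 ^ (Γ.card * (e * (6 * J + 1) + 1)) := by exact_mod_cast hlow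
        set X : ℝ := ((bohr Γ (κ / 2 * ρ)).card : ℝ)
        set Y : ℝ := (64 : ℝ) ^ (J * n * (e * (6 * J + 1) + 1))
        have hY : 0 < Y := by positivity
        have hX : 0 ≤ X := by positivity
        have c1 := mul_le_mul_of_nonneg_left hexp hX
        have c2 := mul_le_mul_of_nonneg_left (hlow'.trans c1) (by positivity : 0 ≤ α ^ 2)
        have c3 : 130 * Y ≤ (α ^ 2 * X) * Y := by linarith
        have c4 := le_of_mul_le_mul_right c3 hY
        have c5 := mul_le_mul_of_nonneg_right (pow_le_pow_left₀ hα.le hαj 2) hX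
        linarith)
      p k r n hp hp6 (hpγ.trans (by
        apply mul_le_mul_of_nonneg_left _ (by positivity); linarith)) hΓJ hτ0
      (hτ.trans (by
        have := pow_le_pow_left₀ (by positivity)
          (mul_le_mul_of_nonneg_left hαj (by norm_num : (0 : ℝ) ≤ 98 / 100)) (3 * p)
        linarith)) hτ1 hε hε1 hk hkε hrε hn hnσ hmn hrτ hnκ
    refine ⟨Γ', ρ', x', ?_, ?_, h3.trans hρ1, h4, ?_⟩
    · rw [add_mul, one_mul]; omega
    · refine le_trans ?_ h2
      rw [show 6 * (j + 1) = 6 + 6 * j by ring, pow_add]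
      exact mul_le_mul_of_nonneg_left hρa (by positivity)
    · rw [pow_succ]; linarith

/-- The absolute constant of the density theorem. -/
def KK : ℕ := 260 * 100 ^ 2 * (64 * 1080000 * 362 ^ 4) ^ 2

set_option maxHeartbeats 1000000 in
lemma roth_group : ∀ (L : ℕ), 1 ≤ L → Odd (Fintype.card G) →
    2 ^ (KK * L ^ 18) ≤ Fintype.card G →
    ∀ A : Finset G, (∀ x ∈ A, ∀ y ∈ A, ∀ z ∈ A, x + y = z + z → x = y) →
      (A.card : ℝ) ≤ (1 / 2) ^ L * Fintype.card G := by
  intro L hL hodd hcard A hAP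
  by_contra! hlt
  obtain ⟨s, hs⟩ : ∃ s : ℕ, s = 362 * L ^ 2 := ⟨_, rfl⟩
  obtain ⟨k, hk⟩ : ∃ k : ℕ, k = 1080000 * s ^ 3 := ⟨_, rfl⟩
  obtain ⟨n, hn⟩ : ∃ n : ℕ, n = 64 * s * k := ⟨_, rfl⟩
  obtain ⟨J, hJ⟩ : ∃ J : ℕ, J = 100 * L := ⟨_, rfl⟩
  have hL2 : L ≤ L ^ 2 := by nlinarith
  have hs1 : 362 ≤ s := by nlinarith
  have hsL : 362 * L ≤ s := by omega
  have hs3 : s ≤ s ^ 3 := Nat.le_self_pow (by norm_num) s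
  have hk1 : s ≤ k := by omega
  have hn1 : 64 * s * 362 ≤ n := by rw [hn]; exact Nat.mul_le_mul_left _ (by omega)
  have hKeq : KK * L ^ 18 = 260 * J ^ 2 * n ^ 2 := by
    rw [KK, hJ, hn, hk, hs]; ring
  rw [hKeq] at hcard
  have hα : (0 : ℝ) < (1 / 2) ^ L := by positivity
  have two_pow : ∀ a b : ℕ, (1 / 2 : ℝ) ^ a * 2 ^ (a + b) = 2 ^ b := by
    intro a b
    rw [pow_add, ← mul_assoc, ← mul_pow]; norm_num
  have half_le : ∀ a b : ℕ, a ≤ b → (1 / 2 : ℝ) ^ b ≤ (1 / 2) ^ a := fun a b h =>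
    pow_le_pow_of_le_one (by norm_num) (by norm_num) h
  have exp_ge : ∀ t : ℕ, (2 : ℝ) ^ t ≤ Real.exp t := by
    intro t
    have h1 : (2 : ℝ) ≤ Real.exp 1 := by linarith [Real.add_one_le_exp (1 : ℝ)]
    calc (2 : ℝ) ^ t ≤ (Real.exp 1) ^ t := pow_le_pow_left₀ (by norm_num) h1 t
      _ = Real.exp t := by rw [← Real.exp_nat_mul, mul_one]
  have h98 : (1 / 2 : ℝ) ^ (L + 1) ≤ 98 / 100 * (1 / 2) ^ L := by
    rw [pow_succ]; nlinarith
  have hsR : (0 : ℝ) < s := by exact_mod_cast (by omega : 0 < s)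
  have hm200 : (200 : ℝ) ≤ ((2 ^ (2 * n) : ℕ) : ℝ) * (1 / 2) ^ L := by
    push_cast
    obtain ⟨b, hb⟩ : ∃ b, 2 * n = L + (8 + b) := ⟨2 * n - L - 8, by omega⟩
    rw [hb, mul_comm, two_pow, pow_add]
    have : (1 : ℝ) ≤ 2 ^ b := one_le_pow₀ (by norm_num)
    nlinarith
  have hJn : J ≤ n := by omega
  have hn2 : n < 2 ^ n := Nat.lt_two_pow_self
  have hnR : (n : ℝ) ≤ 2 ^ n := by exact_mod_cast hn2.le
  have hκd : 4 * ((6 * (J * n) * 2 ^ (2 * n) + 1 : ℕ) : ℝ) * (1 / 2) ^ (5 * n) ≤ 1 := by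
    have h1 : 4 * (6 * (J * n) * 2 ^ (2 * n) + 1) ≤ 2 ^ (5 * n) := by
      have h2 : J * n ≤ 2 ^ n * 2 ^ n := Nat.mul_le_mul (hJn.trans hn2.le) hn2.le
      have h3 : 28 ≤ 2 ^ n := by
        calc 28 ≤ 2 ^ 5 := by norm_num
          _ ≤ 2 ^ n := Nat.pow_le_pow_right (by norm_num) (by omega)
      have h4 : 1 ≤ 2 ^ n * 2 ^ n * 2 ^ (2 * n) := Nat.one_le_iff_ne_zero.2 (by positivity)
      have h5 := Nat.mul_le_mul_right (2 ^ (2 * n)) h2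
      calc 4 * (6 * (J * n) * 2 ^ (2 * n) + 1) ≤ 28 * (2 ^ n * 2 ^ n * 2 ^ (2 * n)) := by linarith
        _ ≤ 2 ^ n * (2 ^ n * 2 ^ n * 2 ^ (2 * n)) := Nat.mul_le_mul_right _ h3
        _ = 2 ^ (5 * n) := by ring
    have h2 : 4 * ((6 * (J * n) * 2 ^ (2 * n) + 1 : ℕ) : ℝ) ≤ 2 ^ (5 * n) := by exact_mod_cast h1
    have h3 := mul_le_mul_of_nonneg_right h2 (by positivity : (0 : ℝ) ≤ (1 / 2) ^ (5 * n))
    have h4 : (2 : ℝ) ^ (5 * n) * (1 / 2) ^ (5 * n) = 1 := by rw [← mul_pow]; norm_num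
    linarith
  have key := iterate_step (J := J) (m := 2 ^ (2 * n)) (e := 6 * n) (κ := (1 / 2) ^ (5 * n)) hodd
    Nat.one_le_two_pow (by positivity) (60 * L) k s n hκd (by
      obtain ⟨b, hb⟩ : ∃ b, 6 * n = 5 * n + (2 + b) := ⟨n - 2, by omega⟩
      have := two_pow (5 * n) (2 + b)
      rw [← hb] at this
      have h1 : (1 : ℝ) ≤ 2 ^ b := one_le_pow₀ (by norm_num)
      have h2 : (2 : ℝ) ^ (2 + b) = 4 * 2 ^ b := by rw [pow_add]; norm_num
      linarith) A hAP ((1 / 2) ^ L) ((1 / 2) ^ s) (1 / (300 * s)) hα hlt.le hm200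
    (by
      have h1 : 2 ^ 8 * 64 ^ (J * n * (6 * n * (6 * J + 1) + 1)) * 2 ^ (2 * L) ≤
          2 ^ (260 * J ^ 2 * n ^ 2) := by
        rw [show (64 : ℕ) = 2 ^ 6 by norm_num, ← pow_mul, ← pow_add, ← pow_add]
        apply Nat.pow_le_pow_right (by norm_num)
        have hJ1 : 100 ≤ J := by omega
        have hJL : L ≤ J := by omega
        have a1 : 1 ≤ J * n := Nat.mul_pos (by omega) (by omega)
        have a2 : J ≤ J * n := Nat.le_mul_of_pos_right _ (by omega)
        have a4 : J * n ≤ (J * n) * (J * n) := Nat.le_mul_of_pos_right _ a1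
        have a5 : J * n * n ≤ (J * n) * (J * n) := by
          have := Nat.mul_le_mul_left (J * n) (Nat.le_mul_of_pos_left n (by omega : 0 < J))
          exact this
        have a6 : 100 * (J * n * n) ≤ (J * n) * (J * n) := by
          calc 100 * (J * n * n) ≤ J * (J * n * n) := Nat.mul_le_mul_right _ hJ1
            _ = _ := by ring
        have a7 : 100 * (J * n) ≤ (J * n) * (J * n) := Nat.mul_le_mul_right _ (hJ1.trans a2)
        have e1 : 8 + 6 * (J * n * (6 * n * (6 * J + 1) + 1)) + 2 * L =
          8 + 216 * ((J * n) * (J * n)) + 36 * (J * n * n) + 6 * (J * n) + 2 * L := by ring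
        have e2 : 260 * J ^ 2 * n ^ 2 = 260 * ((J * n) * (J * n)) := by ring
        rw [e1, e2]
        omega
      have h2 : (2 : ℝ) ^ 8 * 64 ^ (J * n * (6 * n * (6 * J + 1) + 1)) * 2 ^ (2 * L) ≤
          Fintype.card G := by exact_mod_cast h1.trans hcard
      have h3 := mul_le_mul_of_nonneg_left h2 (by positivity : (0 : ℝ) ≤ ((1 / 2) ^ L) ^ 2)
      have h4 : (((1 / 2 : ℝ)) ^ L) ^ 2 * 2 ^ (2 * L) = 1 := by
        rw [← pow_mul, mul_comm L 2, ← mul_pow]; norm_num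
      set Y : ℝ := 64 ^ (J * n * (6 * n * (6 * J + 1) + 1))
      have hY : 0 < Y := by positivity
      calc 130 * Y ≤ 2 ^ 8 * Y := by linarith
        _ = 2 ^ 8 * Y * ((((1 / 2 : ℝ)) ^ L) ^ 2 * 2 ^ (2 * L)) := by rw [h4, mul_one]
        _ = (((1 / 2 : ℝ)) ^ L) ^ 2 * (2 ^ 8 * Y * 2 ^ (2 * L)) := by ring
        _ ≤ _ := h3)
    ⟨30 * L, by ring⟩ (by omega)
    (by
      have h1 : (8 / 9 : ℝ) ^ (60 * L) ≤ (1 / 2) ^ (L + 2) := by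
        rw [show 60 * L = 6 * (10 * L) by ring, pow_mul]
        calc ((8 / 9 : ℝ) ^ 6) ^ (10 * L) ≤ (1 / 2) ^ (10 * L) :=
              pow_le_pow_left₀ (by positivity) (by norm_num) _
          _ ≤ _ := half_le _ _ (by omega)
      have h2 : (4 / 5 : ℝ) ^ (60 * L) = (9 / 10) ^ (60 * L) * (8 / 9) ^ (60 * L) := by
        rw [← mul_pow]; norm_num
      rw [h2]
      apply mul_le_mul_of_nonneg_left _ (by positivity)
      have h3 : (1 / 2 : ℝ) ^ (L + 2) = (1 / 2) ^ (L + 1) / 2 := by rw [pow_succ _ (L + 1)]; ring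
      linarith)
    (by positivity)
    (by
      have h1 : ((1 / 2 : ℝ) ^ (L + 1)) ^ (3 * (60 * L)) ≤
          (98 / 100 * (1 / 2) ^ L) ^ (3 * (60 * L)) := pow_le_pow_left₀ (by positivity) h98 _
      rw [← pow_mul] at h1
      have h2 := half_le ((L + 1) * (3 * (60 * L)) + 2) s (by rw [hs]; nlinarith)
      rw [pow_add] at h2
      linarith)
    (pow_le_one₀ (by norm_num) (by norm_num)) (by positivity)
    (by
      rw [div_le_one (by positivity)]
      have : (1 : ℝ) ≤ s := by exact_mod_cast (by omega : 1 ≤ s)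
      linarith) (by omega)
    (by
      have h1 : (k : ℝ) * (1 / (300 * s)) ^ 2 / 4 = ((3 * s : ℕ) : ℝ) := by
        rw [hk]; push_cast; field_simp; norm_num
      rw [h1, Real.exp_neg]
      have h2 := exp_ge (3 * s)
      have h3 : 4800 * s * 2 ^ s ≤ 2 ^ (3 * s) := by
        have a1 : 4800 ≤ 2 ^ s := by
          calc 4800 ≤ 2 ^ 13 := by norm_num
            _ ≤ 2 ^ s := Nat.pow_le_pow_right (by norm_num) (by omega)
        calc 4800 * s * 2 ^ s ≤ 2 ^ s * 2 ^ s * 2 ^ s :=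
              Nat.mul_le_mul_right _ (Nat.mul_le_mul a1 Nat.lt_two_pow_self.le)
          _ = _ := by ring
      have h4 : (4800 : ℝ) * s * 2 ^ s ≤ Real.exp ((3 * s : ℕ) : ℝ) :=
        le_trans (by exact_mod_cast h3) h2
      rw [one_div_pow, one_div_mul_one_div, ← div_eq_mul_inv, div_le_div_iff₀ (Real.exp_pos _)
        (by positivity)]
      linarith)
    (by
      have : 300 * (s : ℝ) * (1 / (300 * s)) = 1 := by field_simp
      exact this.le)
    (by omega)
    (by
      have h1 : (n : ℝ) / 32 = ((2 * s * k : ℕ) : ℝ) := by rw [hn]; push_cast; ring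
      rw [h1]
      have h2 := exp_ge (2 * s * k)
      have h3 : ((1 / 2 : ℝ) ^ s / 16) ^ k = (1 / 2) ^ ((s + 4) * k) := by
        rw [pow_mul, pow_add]; congr 1; norm_num; ring
      rw [h3]
      obtain ⟨b, hb⟩ : ∃ b, 2 * s * k = (s + 4) * k + (3 + b) := by
        refine ⟨2 * s * k - (s + 4) * k - 3, ?_⟩
        have : (s + 4) * k + 3 ≤ 2 * s * k := by nlinarith
        omega
      have h4 := two_pow ((s + 4) * k) (3 + b)
      rw [← hb] at h4
      have h5 : (2 : ℝ) ^ (3 + b) = 8 * 2 ^ b := by rw [pow_add]; norm_num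
      have h6 : (1 : ℝ) ≤ 2 ^ b := one_le_pow₀ (by norm_num)
      have h7 := mul_le_mul_of_nonneg_left h2
        (by positivity : (0 : ℝ) ≤ (1 / 2) ^ ((s + 4) * k))
      linarith)
    (by
      obtain ⟨b, hb⟩ : ∃ b, n = s + 9 + b := ⟨n - s - 9, by omega⟩
      push_cast
      have e1 : (2 : ℝ) / 2 ^ (2 * n) * 2 ^ n = 2 * (1 / 2) ^ n := by
        rw [one_div_pow, two_mul n, pow_add]; field_simp
      rw [e1]
      have := half_le (s + 9) n (by omega)
      rw [pow_add] at this
      have h0 : (0 : ℝ) < (1 / 2) ^ s := by positivity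
      norm_num at this ⊢
      linarith)
    (by
      have := half_le (s + 8) (2 * s) (by omega)
      rw [pow_add] at this
      have h0 : (0 : ℝ) < (1 / 2) ^ s := by positivity
      norm_num at this ⊢
      linarith)
    (by
      have h1 := mul_le_mul_of_nonneg_right hnR (by positivity : (0 : ℝ) ≤ (1 / 2) ^ (5 * n))
      have e1 : (2 : ℝ) ^ n * (1 / 2) ^ (5 * n) = (1 / 2) ^ (4 * n) := by
        rw [show 5 * n = n + 4 * n by ring, pow_add, ← mul_assoc, ← mul_pow]; norm_num
      have := half_le (s + 8) (4 * n) (by omega)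
      rw [pow_add] at this
      have h0 : (0 : ℝ) < (1 / 2) ^ s := by positivity
      rw [e1] at h1
      norm_num at this h1 ⊢
      linarith)
    J le_rfl
  obtain ⟨Γ, ρ, x, -, -, -, -, hx⟩ := key
  have h1 := hx.trans (avg_ind_le_one _ _ _)
  have h2 : (5 / 2 : ℝ) ^ L * (1 / 2) ^ L ≤ (101 / 100) ^ J * (1 / 2) ^ L := by
    apply mul_le_mul_of_nonneg_right _ (by positivity)
    rw [hJ, pow_mul]
    exact pow_le_pow_left₀ (by norm_num) (by norm_num) _
  have h3 : (5 / 2 : ℝ) ^ L * (1 / 2) ^ L = (5 / 4) ^ L := by rw [← mul_pow]; norm_num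
  have h4 : (5 / 4 : ℝ) ^ 1 ≤ (5 / 4) ^ L := pow_le_pow_right₀ (by norm_num) hL
  linarith

end IterI
end KM

set_option linter.unusedSectionVars false
namespace KM
open Finset

lemma one_le_KK : 1 ≤ KK := by norm_num [KK]

lemma roth_nat (N L : ℕ) (hN : 1 ≤ N) (hL : 1 ≤ L) (hKL : 2 ^ (KK * L ^ 18) ≤ 2 * N + 1)
    (A : Finset ℕ) (hA : ∀ a ∈ A, 1 ≤ a ∧ a ≤ N)
    (hAP : ∀ x ∈ A, ∀ y ∈ A, ∀ z ∈ A, x + y = 2 * z → x = y) :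
    (A.card : ℝ) ≤ (1 / 2) ^ L * (2 * N + 1) := by
  haveI : NeZero (2 * N + 1) := ⟨by omega⟩
  have hinj : Set.InjOn (fun a : ℕ => (a : ZMod (2 * N + 1))) A := by
    intro a ha b hb h
    have h' := (ZMod.natCast_eq_natCast_iff' a b (2 * N + 1)).1 h
    have := hA a ha
    have := hA b hb
    rwa [Nat.mod_eq_of_lt (by omega), Nat.mod_eq_of_lt (by omega)] at h'
  have hc : Fintype.card (ZMod (2 * N + 1)) = 2 * N + 1 := ZMod.card _
  have h := roth_group (G := ZMod (2 * N + 1)) L hL (by rw [hc]; exact ⟨N, rfl⟩)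
    (by rw [hc]; exact hKL) (A.image fun a : ℕ => (a : ZMod (2 * N + 1))) (by
      intro x hx y hy z hz h
      obtain ⟨a, ha, rfl⟩ := mem_image.1 hx
      obtain ⟨b, hb, rfl⟩ := mem_image.1 hy
      obtain ⟨c, hc, rfl⟩ := mem_image.1 hz
      have h1 : ((a + b : ℕ) : ZMod (2 * N + 1)) = ((c + c : ℕ) : ZMod (2 * N + 1)) := by
        push_cast; exact h
      have h' := (ZMod.natCast_eq_natCast_iff' _ _ _).1 h1
      have := hA a ha
      have := hA b hb
      have := hA c hc
      rw [Nat.mod_eq_of_lt (by omega), Nat.mod_eq_of_lt (by omega)] at h'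
      rw [hAP a ha b hb c hc (by omega)])
  rw [card_image_of_injOn hinj, hc] at h
  exact_mod_cast h

lemma exists_L0 : ∃ L0 : ℕ, 1 ≤ L0 ∧ ∀ L, L0 ≤ L →
    ((KK : ℝ) * ((L : ℝ) + 1) ^ 18) ^ 2 ≤ 2 ^ L := by
  have hK : (0 : ℝ) < KK := by exact_mod_cast one_le_KK
  have ht := tendsto_pow_const_div_const_pow_of_one_lt 36 (by norm_num : (1 : ℝ) < 2)
  have hev := ht.eventually (gt_mem_nhds (by positivity : (0 : ℝ) < 1 / (2 * (KK : ℝ) ^ 2)))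
  obtain ⟨M, hM⟩ := Filter.eventually_atTop.1 hev
  refine ⟨M + 1, by omega, fun L hL => ?_⟩
  have h := hM (L + 1) (by omega)
  rw [div_lt_div_iff₀ (by positivity) (by positivity)] at h
  push_cast at h
  rw [pow_succ (2 : ℝ) L] at h
  have e : ((KK : ℝ) * ((L : ℝ) + 1) ^ 18) ^ 2 = ((L : ℝ) + 1) ^ 36 * (KK : ℝ) ^ 2 := by ring
  rw [e]
  linarith

lemma pi_lower (N : ℕ) (hN : 10 ≤ N) : (N : ℝ) / 4 ≤ Nat.primeCounting N * Real.log N := by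
  have hNR : (10 : ℝ) ≤ N := by exact_mod_cast hN
  have hl : 0 < Real.log N := Real.log_pos (by linarith)
  have h := Chebyshev.pi_ge N
  rw [div_le_iff₀ hl] at h
  have h2 := Real.log_two_gt_d9
  have h2' := Real.log_two_lt_d9
  have h3 : Real.log ((N : ℝ) + 1) ≤ ((N : ℝ) + 1) / 8 - 1 + 3 * Real.log 2 := by
    have h4 := Real.log_le_sub_one_of_pos (by positivity : 0 < ((N : ℝ) + 1) / 8)
    rw [Real.log_div (by positivity) (by norm_num), show (8 : ℝ) = 2 ^ 3 by norm_num,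
      Real.log_pow] at h4
    push_cast at h4
    norm_num at h4 ⊢
    linarith
  have h5 : (N : ℝ) * (69 / 100) ≤ N * Real.log 2 :=
    mul_le_mul_of_nonneg_left (by linarith) (by linarith)
  linarith

end KM

theorem roth_in_primes :
    ∃ c C : ℝ, 0 < c ∧ 0 < C ∧
      ∀ N : ℕ, 3 ≤ N → ∀ A : Finset ℕ,
        (∀ a ∈ A, a.Prime) →
        (∀ a ∈ A, 1 ≤ a ∧ a ≤ N) →
        (∀ x ∈ A, ∀ y ∈ A, ∀ z ∈ A, x + y = 2 * z → x = y) →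
        (A.card : ℝ) ≤ C * (Nat.primeCounting N : ℝ) / Real.log N ^ c := by
  obtain ⟨L0, hL01, hL0⟩ := KM.exists_L0
  have hK : (1 : ℝ) ≤ KM.KK := by exact_mod_cast KM.one_le_KK
  set T : ℝ := KM.KK * ((L0 : ℝ) + 1) ^ 18 + 10 with hT
  have hT0 : 0 < T := by positivity
  refine ⟨1, T + 12, by norm_num, by linarith, ?_⟩
  intro N hN A hprime hA hAP
  have hNR : (3 : ℝ) ≤ N := by exact_mod_cast hN
  have hl : 0 < Real.log N := Real.log_pos (by linarith)
  rw [Real.rpow_one, le_div_iff₀ hl]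
  have hπ0 : (0 : ℝ) ≤ Nat.primeCounting N := by positivity
  rcases le_or_gt (Real.log N) T with hcase | hcase
  · have h1 : A.card ≤ Nat.primeCounting N := by
      rw [Nat.primeCounting, Nat.primeCounting', Nat.count_eq_card_filter_range]
      apply Finset.card_le_card
      intro a ha
      rw [Finset.mem_filter, Finset.mem_range]
      exact ⟨by have := hA a ha; omega, hprime a ha⟩
    have h2 : (A.card : ℝ) ≤ Nat.primeCounting N := by exact_mod_cast h1
    have h3 := mul_le_mul h2 hcase hl.le hπ0
    nlinarith
  · have hex : ∃ L : ℕ, Real.log N < KM.KK * ((L : ℝ) + 1) ^ 18 := by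
      obtain ⟨L, hL⟩ := exists_nat_gt (Real.log N)
      refine ⟨L, ?_⟩
      have h1 : (1 : ℝ) ≤ (L : ℝ) + 1 := by linarith [Nat.cast_nonneg (α := ℝ) L]
      have h2 : (L : ℝ) + 1 ≤ ((L : ℝ) + 1) ^ 18 := le_self_pow₀ h1 (by norm_num)
      nlinarith
    classical
    obtain ⟨L, hL⟩ : ∃ L, L = Nat.find hex := ⟨_, rfl⟩
    have hLs : Real.log N < KM.KK * ((L : ℝ) + 1) ^ 18 := by rw [hL]; exact Nat.find_spec hex
    have hLL0 : L0 ≤ L := by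
      by_contra! hlt
      have h1 : ((L : ℝ) + 1) ^ 18 ≤ ((L0 : ℝ) + 1) ^ 18 := by
        have : (L : ℝ) ≤ L0 := by exact_mod_cast hlt.le
        exact pow_le_pow_left₀ (by positivity) (by linarith) _
      have h2 := mul_le_mul_of_nonneg_left h1 (by linarith : (0 : ℝ) ≤ KM.KK)
      linarith
    have hmin : KM.KK * (L : ℝ) ^ 18 ≤ Real.log N := by
      have h1 := Nat.find_min hex (m := L - 1) (by omega)
      rw [not_lt] at h1
      have h2 : ((L - 1 : ℕ) : ℝ) + 1 = L := by
        exact_mod_cast (by omega : L - 1 + 1 = L)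
      rwa [h2] at h1
    have hpow : 2 ^ (KM.KK * L ^ 18) ≤ 2 * N + 1 := by
      have h1 : ((2 : ℝ)) ^ (KM.KK * L ^ 18) ≤ N := by
        have e1 : (2 : ℝ) ≤ Real.exp 1 := by linarith [Real.add_one_le_exp (1 : ℝ)]
        calc ((2 : ℝ)) ^ (KM.KK * L ^ 18) ≤ (Real.exp 1) ^ (KM.KK * L ^ 18) :=
              pow_le_pow_left₀ (by norm_num) e1 _
          _ = Real.exp (KM.KK * (L : ℝ) ^ 18) := by
              rw [← Real.exp_nat_mul, mul_one]; push_cast; rfl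
          _ ≤ Real.exp (Real.log N) := Real.exp_le_exp.2 hmin
          _ = N := Real.exp_log (by linarith)
      have h2 : 2 ^ (KM.KK * L ^ 18) ≤ N := by exact_mod_cast h1
      omega
    have hcard := KM.roth_nat N L (by omega) (by omega) hpow A hA hAP
    have h2L : Real.log N ^ 2 ≤ 2 ^ L :=
      (pow_le_pow_left₀ hl.le hLs.le 2).trans (hL0 L hLL0)
    have hN10 : 10 ≤ N := by
      have h1 := Real.log_le_sub_one_of_pos (by linarith : (0 : ℝ) < N)
      have h2 : (0 : ℝ) ≤ KM.KK * ((L0 : ℝ) + 1) ^ 18 := by positivity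
      have h3 : (10 : ℝ) ≤ N := by linarith
      exact_mod_cast h3
    have hpi := KM.pi_lower N hN10
    -- combine the density bound with the Chebyshev bound
    have h1 : (A.card : ℝ) * Real.log N ^ 2 ≤ 2 * N + 1 := by
      calc (A.card : ℝ) * Real.log N ^ 2 ≤ ((1 / 2) ^ L * (2 * N + 1)) * 2 ^ L :=
            mul_le_mul hcard h2L (by positivity) (by positivity)
        _ = ((1 / 2) * 2) ^ L * (2 * N + 1) := by rw [mul_pow]; ring
        _ = _ := by norm_num
    have h2 : (A.card : ℝ) * Real.log N * Real.log N ≤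
        12 * (Nat.primeCounting N : ℝ) * Real.log N := by nlinarith
    have h3 := le_of_mul_le_mul_right h2 hl
    nlinarith
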